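/- arXiv:2412.18761 — 9 statements merged into one kernel-verified Lean document; each statement's English description precedes it below -/
import Mathlib

section
/- Let φ: [0,∞) → ℝ be continuous and strictly decreasing with φ(0) = 1 and φ(t) → 0 as t → ∞, and suppose φ is regularly varying at ∞ with index −α for some α > 0. Then for every d ≥ 2 and every w = (w₁, …, w_d) ∈ (0,∞)^d, the limit lim_{u→0⁺} φ(∑_{i=1}^d φ⁻¹(u·wᵢ)) / u exists and equals (∑_{j=1}^d wⱼ^{−1/α})^{−α}. -/
open Filter Topology

/-!
Let `f` be antitone and regularly varying of index `ρ < 0`. If `t → ∞`, `c > 0` and `s` stays where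
`f` is antitone, then `s / t → c` if and only if `f s / f t → c ^ ρ`: monotonicity compares `f s`
with `f (t * x)` for constants `x` on either side of `c`, so pointwise regular variation suffices
and no uniform convergence theorem is needed.

Since `φ (φinv (u * w)) / φ (φinv u) = w`, one direction gives
`φinv (u * w) / φinv u → w ^ (-(1 / α))`. These ratios are summed over the weights, and the other
direction is applied to the sum.
-/

/-- Regular variation at `∞` with index `ρ`. Neither measurability nor a sign of `f` is assumed; as
division by zero yields `0` and the limits are positive, `f` cannot vanish near `∞`. -/
def IsRegularlyVarying (f : ℝ → ℝ) (ρ : ℝ) : Prop :=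
  ∀ x > 0, Tendsto (fun t => f (t * x) / f t) atTop (𝓝 (x ^ ρ))

theorem tendsto_atTop_of_antitoneOn_comp {ι X Y : Type*} [LinearOrder X] [LinearOrder Y]
    [TopologicalSpace Y] [OrderClosedTopology Y] {f : X → Y} {a : X} {z : Y} {l : Filter ι}
    {s : ι → X} (hf : AntitoneOn f (Set.Ici a)) (hz : ∀ᶠ x in atTop, z < f x)
    (hs : ∀ᶠ i in l, a ≤ s i) (hfs : Tendsto (fun i => f (s i)) l (𝓝 z)) : Tendsto s l atTop := by
  refine tendsto_atTop.2 fun b => ?_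
  have : Nonempty X := ⟨a⟩
  obtain ⟨x, hzx, hax, hbx⟩ :=
    (hz.and ((eventually_ge_atTop a).and (eventually_ge_atTop b))).exists
  filter_upwards [hs, hfs.eventually_lt_const hzx] with i hai hlt
  exact hbx.trans (hf.reflect_lt hai hax hlt).le

namespace IsRegularlyVarying

variable {ι : Type*} {l : Filter ι} {f g : ℝ → ℝ} {s t : ι → ℝ} {a c x ρ : ℝ}

theorem tendsto_comp (hf : IsRegularlyVarying f ρ) (ht : Tendsto t l atTop) (hx : 0 < x) :
    Tendsto (fun i => f (t i * x) / f (t i)) l (𝓝 (x ^ ρ)) :=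
  (hf x hx).comp ht

theorem eventually_pos (hf : IsRegularlyVarying f ρ) (hρ : ρ < 0)
    (hanti : AntitoneOn f (Set.Ici a)) : ∀ᶠ x in atTop, 0 < f x := by
  have hlim := hf 2 two_pos
  have hratio_pos := hlim.eventually_const_lt (Real.rpow_pos_of_pos two_pos ρ)
  have hratio_lt := hlim.eventually_lt_const (Real.rpow_lt_one_of_one_lt_of_neg one_lt_two hρ)
  filter_upwards [hratio_pos, hratio_lt, eventually_ge_atTop a, eventually_ge_atTop 0]
    with x hpos hlt hax hx
  have hle : f (x * 2) ≤ f x := hanti hax (Set.mem_Ici.2 (by linarith)) (by linarith)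
  by_contra! hfx
  -- A negative `f x` would turn `f (x * 2) ≤ f x` into a ratio of at least one.
  rcases hfx.lt_or_eq with hneg | hzero
  · exact hlt.not_ge ((one_le_div_of_neg hneg).2 hle)
  · simp [hzero] at hpos

theorem tendsto_comp_div_comp (hf : IsRegularlyVarying f ρ) (hpos : ∀ᶠ x in atTop, 0 < f x)
    (hanti : AntitoneOn f (Set.Ici a)) (ht : Tendsto t l atTop) (hc : 0 < c)
    (hst : Tendsto (fun i => s i / t i) l (𝓝 c)) :
    Tendsto (fun i => f (s i) / f (t i)) l (𝓝 (c ^ ρ)) := by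
  have hs : Tendsto s l atTop := (hst.pos_mul_atTop hc ht).congr' <| by
    filter_upwards [ht.eventually_ne_atTop 0] with i hi using div_mul_cancel₀ _ hi
  have hcont : Tendsto (fun x : ℝ => x ^ ρ) (𝓝 c) (𝓝 (c ^ ρ)) :=
    Real.continuousAt_rpow_const c ρ (.inl hc.ne')
  refine tendsto_order.2 ⟨fun b hb => ?_, fun b hb => ?_⟩
  · obtain ⟨x, hbx, hcx : c < x⟩ :=
      (((hcont.eventually_const_lt hb).filter_mono nhdsWithin_le_nhds).and
        (self_mem_nhdsWithin : Set.Ioi c ∈ 𝓝[>] c)).exists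
    filter_upwards [hst.eventually_lt_const hcx, ht.eventually_gt_atTop 0, ht.eventually hpos,
      hs.eventually_ge_atTop a,
      (hf.tendsto_comp ht (hc.trans hcx)).eventually_const_lt hbx] with i hlt hti hft hsi hratio
    have hle : s i ≤ t i * x := ((div_lt_iff₀' hti).1 hlt).le
    exact hratio.trans_le (div_le_div_of_nonneg_right (hanti hsi (hsi.trans hle) hle) hft.le)
  · obtain ⟨x, ⟨hbx, hx⟩, hxc : x < c⟩ :=
      ((((hcont.eventually_lt_const hb).and (lt_mem_nhds hc)).filter_mono nhdsWithin_le_nhds).and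
        (self_mem_nhdsWithin : Set.Iio c ∈ 𝓝[<] c)).exists
    filter_upwards [hst.eventually_const_lt hxc, ht.eventually_gt_atTop 0, ht.eventually hpos,
      (ht.atTop_mul_const hx).eventually_ge_atTop a,
      (hf.tendsto_comp ht hx).eventually_lt_const hbx] with i hlt hti hft htx hratio
    have hle : t i * x ≤ s i := ((lt_div_iff₀' hti).1 hlt).le
    exact (div_le_div_of_nonneg_right (hanti htx (htx.trans hle) hle) hft.le).trans_lt hratio

theorem tendsto_div_of_tendsto_comp_div_comp (hf : IsRegularlyVarying f ρ) (hρ : ρ < 0)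
    (hanti : AntitoneOn f (Set.Ici a)) (ht : Tendsto t l atTop) (hs : ∀ᶠ i in l, a ≤ s i)
    (hc : 0 < c) (hfst : Tendsto (fun i => f (s i) / f (t i)) l (𝓝 (c ^ ρ))) :
    Tendsto (fun i => s i / t i) l (𝓝 c) := by
  have hft := ht.eventually (hf.eventually_pos hρ hanti)
  refine tendsto_order.2 ⟨fun b hb => ?_, fun b hb => ?_⟩
  · obtain ⟨x, hbx, hxc⟩ := exists_between (max_lt hb hc)
    obtain ⟨hbx, hx⟩ := max_lt_iff.1 hbx
    filter_upwards [hs, hft, ht.eventually_gt_atTop 0,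
      (ht.atTop_mul_const hx).eventually_ge_atTop a,
      hfst.eventually_lt (hf.tendsto_comp ht hx) (Real.rpow_lt_rpow_of_neg hx hxc hρ)]
      with i hsi hft hti htx hlt
    have hf_lt : f (s i) < f (t i * x) := (div_lt_div_iff_of_pos_right hft).1 hlt
    exact hbx.trans ((lt_div_iff₀' hti).2 (hanti.reflect_lt hsi htx hf_lt))
  · have hb0 : 0 < b := hc.trans hb
    filter_upwards [hs, hft, ht.eventually_gt_atTop 0,
      (ht.atTop_mul_const hb0).eventually_ge_atTop a,
      (hf.tendsto_comp ht hb0).eventually_lt hfst (Real.rpow_lt_rpow_of_neg hc hb hρ)]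
      with i hsi hft hti htb hlt
    have hf_lt : f (t i * b) < f (s i) := (div_lt_div_iff_of_pos_right hft).1 hlt
    exact (div_lt_iff₀' hti).2 (hanti.reflect_lt htb hsi hf_lt)

theorem tendsto_rightInverse_atTop (hf : IsRegularlyVarying f ρ) (hρ : ρ < 0)
    (hanti : AntitoneOn f (Set.Ici a)) (hg : ∀ᶠ u in 𝓝[>] 0, a ≤ g u ∧ f (g u) = u) :
    Tendsto g (𝓝[>] 0) atTop := by
  refine tendsto_atTop_of_antitoneOn_comp hanti (hf.eventually_pos hρ hanti)
    (hg.mono fun _ hu => hu.1) ?_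
  exact (tendsto_id.mono_left nhdsWithin_le_nhds).congr' (hg.mono fun _ hu => hu.2.symm)

theorem tendsto_rightInverse_mul_div (hf : IsRegularlyVarying f ρ) (hρ : ρ < 0)
    (hanti : AntitoneOn f (Set.Ici a)) (hg : ∀ᶠ u in 𝓝[>] 0, a ≤ g u ∧ f (g u) = u)
    (hx : 0 < x) : Tendsto (fun u => g (u * x) / g u) (𝓝[>] 0) (𝓝 (x ^ ρ⁻¹)) := by
  have hgx : ∀ᶠ u in 𝓝[>] 0, a ≤ g (u * x) ∧ f (g (u * x)) = u * x := by
    simpa only [mul_comm x] using eventually_nhdsGT_zero_mul_left hx hg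
  refine hf.tendsto_div_of_tendsto_comp_div_comp hρ hanti
    (hf.tendsto_rightInverse_atTop hρ hanti hg) (hgx.mono fun _ hu => hu.1)
    (Real.rpow_pos_of_pos hx _) ?_
  rw [Real.rpow_inv_rpow hx.le hρ.ne]
  refine tendsto_const_nhds.congr' ?_
  filter_upwards [hg, hgx, self_mem_nhdsWithin] with u hu hux (hu0 : 0 < u)
  rw [hu.2, hux.2, mul_div_cancel_left₀ x hu0.ne']

end IsRegularlyVarying

theorem archimedean_lower_tail_dependence_regularly_varying_general
    {ι : Type*} [Fintype ι] [Nonempty ι] {φ φinv : ℝ → ℝ} {a α : ℝ}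
    (hanti : AntitoneOn φ (Set.Ici a))
    (hinv : ∀ᶠ u in 𝓝[>] 0, a ≤ φinv u ∧ φ (φinv u) = u)
    (hα : 0 < α) (hRV : IsRegularlyVarying φ (-α)) {w : ι → ℝ} (hw : ∀ i, 0 < w i) :
    Tendsto (fun u => φ (∑ i, φinv (u * w i)) / u) (𝓝[>] 0)
      (𝓝 ((∑ j, w j ^ (-(1 / α))) ^ (-α))) := by
  have hρ : -α < 0 := neg_lt_zero.2 hα
  have hsum : Tendsto (fun u => (∑ i, φinv (u * w i)) / φinv u) (𝓝[>] 0)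
      (𝓝 (∑ j, w j ^ (-(1 / α)))) := by
    simp only [Finset.sum_div, one_div, neg_inv]
    exact tendsto_finsetSum _ fun i _ => hRV.tendsto_rightInverse_mul_div hρ hanti hinv (hw i)
  have hsum_pos : 0 < ∑ j, w j ^ (-(1 / α)) :=
    Finset.sum_pos (fun j _ => Real.rpow_pos_of_pos (hw j) _) Finset.univ_nonempty
  refine (hRV.tendsto_comp_div_comp (hRV.eventually_pos hρ hanti) hanti
    (hRV.tendsto_rightInverse_atTop hρ hanti hinv) hsum_pos hsum).congr' ?_
  filter_upwards [hinv] with u hu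
  rw [hu.2]

/-- Theorem 2.1(1): lower tail dependence of an Archimedean copula whose
Laplace transform `φ` is regularly varying at `∞` with index `-α < 0`. -/
theorem archimedean_lower_tail_dependence_regularly_varying
    (φ φinv : ℝ → ℝ)
    (hcont : ContinuousOn φ (Set.Ici 0))
    (hanti : StrictAntiOn φ (Set.Ici 0))
    (hφ0 : φ 0 = 1)
    (hφtop : Tendsto φ atTop (𝓝 0))
    (hinv : ∀ u ∈ Set.Ioc (0:ℝ) 1, 0 ≤ φinv u ∧ φ (φinv u) = u)
    (α : ℝ) (hα : 0 < α)
    (hRV : ∀ x > (0:ℝ), Tendsto (fun t => φ (t * x) / φ t) atTop (𝓝 (x ^ (-α))))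
    (d : ℕ) (hd : 2 ≤ d) (w : Fin d → ℝ) (hw : ∀ i, 0 < w i) :
    Tendsto (fun u => φ (∑ i, φinv (u * w i)) / u) (𝓝[>] (0:ℝ))
      (𝓝 ((∑ j, (w j) ^ (-(1/α))) ^ (-α))) := by
  have : Nonempty (Fin d) := ⟨⟨0, by lia⟩⟩
  exact archimedean_lower_tail_dependence_regularly_varying_general hanti.antitoneOn
    (mem_of_superset (Ioc_mem_nhdsGT one_pos) hinv) hα hRV hw
end

section
/- Let φ: [0,∞) → ℝ be continuous and strictly decreasing with φ(0) = 1 and φ(t) → 0 as t → ∞, and suppose the map u ↦ φ⁻¹(1−u) is regularly varying at 0 with index β for some β > 0, i.e. φ⁻¹(1−ux)/φ⁻¹(1−u) → x^β as u → 0⁺ for every x > 0. Then for every d ≥ 2 and every w = (w₁, …, w_d) ∈ [0,∞)^d, the limit lim_{u→0⁺} (1 − φ(∑_{i=1}^d φ⁻¹(1 − u·wᵢ))) / u exists and equals (∑_{j=1}^d wⱼ^β)^{1/β}. -/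
open Filter Topology

/-!
Put `F t = 1 - φ t` and `g u = φ⁻¹ (1 - u)`, so that `F` is monotone and `F (g u) = u` near `0⁺`.
Regular variation of `g` gives `∑ i, g (u * w i) ∼ A * g u` with `A = ∑ i, w i ^ β`, whereas
`g (u * b) ∼ b ^ β * g u`. Hence the sum lies eventually above `g (u * b)` when `b ^ β < A` and
below it when `A < b ^ β`. Applying `F` compares `F (∑ i, g (u * w i))` with `u * b`, which squeezes
`F (∑ i, g (u * w i)) / u` towards `A ^ (1 / β)`.
-/

/-- Regular variation of `g` at `0⁺` with index `β`, expressed by limits of ratios only: neither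
measurability nor positivity of `g` is part of the notion. -/
def RegularlyVaryingAtZero (g : ℝ → ℝ) (β : ℝ) : Prop :=
  ∀ x > 0, Tendsto (fun u => g (u * x) / g u) (𝓝[>] 0) (𝓝 (x ^ β))

/-- `g` is a nonnegative right inverse of `F` on some interval `[0, δ)`. Several such `g` may exist,
as `F` need not be injective; the point `0` is included, so `g 0` is a zero of `F`. -/
def IsRightInverseNearZero (F g : ℝ → ℝ) : Prop :=
  ∀ᶠ u in 𝓝[≥] 0, 0 ≤ g u ∧ F (g u) = u

theorem tendsto_mul_const_nhdsGT_zero_nhdsGE_zero {x : ℝ} (hx : 0 ≤ x) :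
    Tendsto (fun u => u * x) (𝓝[>] 0) (𝓝[≥] 0) := by
  refine tendsto_nhdsWithin_iff.2 ⟨?_, ?_⟩
  · exact ((continuous_mul_const x).tendsto' 0 0 (zero_mul x)).mono_left nhdsWithin_le_nhds
  · filter_upwards [self_mem_nhdsWithin] with u hu using mul_nonneg (le_of_lt hu) hx

namespace IsRightInverseNearZero

variable {F g S : ℝ → ℝ} {A b β x : ℝ}

theorem eventually_apply_mul (hg : IsRightInverseNearZero F g) (hx : 0 ≤ x) :
    ∀ᶠ u in 𝓝[>] 0, 0 ≤ g (u * x) ∧ F (g (u * x)) = u * x :=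
  (tendsto_mul_const_nhdsGT_zero_nhdsGE_zero hx).eventually hg

theorem eventually_pos (hg : IsRightInverseNearZero F g) (hF0 : F 0 = 0) :
    ∀ᶠ u in 𝓝[>] 0, 0 < g u := by
  filter_upwards [nhdsWithin_mono 0 Set.Ioi_subset_Ici_self hg, self_mem_nhdsWithin]
    with u ⟨hgu, hFgu⟩ hu
  refine hgu.lt_of_ne fun h => (ne_of_gt hu : u ≠ 0) ?_
  rw [← hFgu, ← h, hF0]

theorem eventually_apply_zero_le_apply_mul (hg : IsRightInverseNearZero F g)
    (hF : MonotoneOn F (Set.Ici 0)) (hx : 0 < x) :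
    ∀ᶠ u in 𝓝[>] 0, g 0 ≤ g (u * x) := by
  obtain ⟨hg0, hFg0⟩ := hg.self_of_nhdsWithin Set.self_mem_Ici
  filter_upwards [hg.eventually_apply_mul hx.le, self_mem_nhdsWithin] with u ⟨hgu, hFgu⟩ hu
  have hlt : F (g 0) < F (g (u * x)) := by
    rw [hFg0, hFgu]
    exact mul_pos hu hx
  exact (hF.reflect_lt hg0 hgu hlt).le

theorem tendsto_apply_zero_div (hg : IsRightInverseNearZero F g) (hF : MonotoneOn F (Set.Ici 0))
    (hF0 : F 0 = 0) (hRV : RegularlyVaryingAtZero g β) (hβ : 0 < β) :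
    Tendsto (fun u => g 0 / g u) (𝓝[>] 0) (𝓝 0) := by
  have hg0 : 0 ≤ g 0 := (hg.self_of_nhdsWithin Set.self_mem_Ici).1
  refine tendsto_order.2 ⟨fun a ha => ?_, fun ε hε => ?_⟩
  · filter_upwards [hg.eventually_pos hF0] with u hgu using ha.trans_le (div_nonneg hg0 hgu.le)
  · obtain ⟨x, hx, hxε⟩ := exists_between (Real.rpow_pos_of_pos hε β⁻¹)
    have hxβ : x ^ β < ε := (Real.lt_rpow_inv_iff_of_pos hx.le hε.le hβ).1 hxε
    filter_upwards [(hRV x hx).eventually_lt_const hxβ, hg.eventually_pos hF0,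
      hg.eventually_apply_zero_le_apply_mul hF hx] with u hratio hgu hle
    exact (div_le_div_of_nonneg_right hle hgu.le).trans_lt hratio

theorem tendsto_apply_mul_div (hg : IsRightInverseNearZero F g) (hF : MonotoneOn F (Set.Ici 0))
    (hF0 : F 0 = 0) (hRV : RegularlyVaryingAtZero g β) (hβ : 0 < β) (hx : 0 ≤ x) :
    Tendsto (fun u => g (u * x) / g u) (𝓝[>] 0) (𝓝 (x ^ β)) := by
  rcases hx.eq_or_lt with rfl | hx
  · simpa only [mul_zero, Real.zero_rpow hβ.ne'] using hg.tendsto_apply_zero_div hF hF0 hRV hβ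
  · exact hRV x hx

theorem tendsto_sum_apply_mul_div {ι : Type*} {s : Finset ι} {w : ι → ℝ}
    (hg : IsRightInverseNearZero F g) (hF : MonotoneOn F (Set.Ici 0)) (hF0 : F 0 = 0)
    (hRV : RegularlyVaryingAtZero g β) (hβ : 0 < β) (hw : ∀ i ∈ s, 0 ≤ w i) :
    Tendsto (fun u => (∑ i ∈ s, g (u * w i)) / g u) (𝓝[>] 0) (𝓝 (∑ i ∈ s, w i ^ β)) := by
  simp only [Finset.sum_div]
  exact tendsto_finsetSum s fun i hi => hg.tendsto_apply_mul_div hF hF0 hRV hβ (hw i hi)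

theorem eventually_sum_apply_mul_nonneg {ι : Type*} {s : Finset ι} {w : ι → ℝ}
    (hg : IsRightInverseNearZero F g) (hw : ∀ i ∈ s, 0 ≤ w i) :
    ∀ᶠ u in 𝓝[>] 0, 0 ≤ ∑ i ∈ s, g (u * w i) := by
  have hall : ∀ᶠ u in 𝓝[>] 0, ∀ i ∈ s, 0 ≤ g (u * w i) :=
    (eventually_all_finset s).2 fun i hi => (hg.eventually_apply_mul (hw i hi)).mono fun _ h => h.1
  exact hall.mono fun _ => Finset.sum_nonneg

theorem eventually_le_comp_div (hg : IsRightInverseNearZero F g)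
    (hF : MonotoneOn F (Set.Ici 0)) (hF0 : F 0 = 0) (hRV : RegularlyVaryingAtZero g β)
    (hS : Tendsto (fun u => S u / g u) (𝓝[>] 0) (𝓝 A)) (hb : 0 < b) (hbA : b ^ β < A) :
    ∀ᶠ u in 𝓝[>] 0, b ≤ F (S u) / u := by
  filter_upwards [(hRV b hb).eventually_lt hS hbA, hg.eventually_pos hF0,
    hg.eventually_apply_mul hb.le, self_mem_nhdsWithin] with u hratio hgu ⟨hgb, hFgb⟩ hu
  have hlt : g (u * b) < S u := (div_lt_div_iff_of_pos_right hgu).1 hratio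
  rw [le_div_iff₀' hu]
  calc u * b = F (g (u * b)) := hFgb.symm
    _ ≤ F (S u) := hF hgb (hgb.trans hlt.le) hlt.le

theorem eventually_comp_div_le (hg : IsRightInverseNearZero F g)
    (hF : MonotoneOn F (Set.Ici 0)) (hF0 : F 0 = 0) (hRV : RegularlyVaryingAtZero g β)
    (hS0 : ∀ᶠ u in 𝓝[>] 0, 0 ≤ S u) (hS : Tendsto (fun u => S u / g u) (𝓝[>] 0) (𝓝 A))
    (hb : 0 < b) (hAb : A < b ^ β) :
    ∀ᶠ u in 𝓝[>] 0, F (S u) / u ≤ b := by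
  filter_upwards [hS.eventually_lt (hRV b hb) hAb, hg.eventually_pos hF0,
    hg.eventually_apply_mul hb.le, hS0, self_mem_nhdsWithin] with u hratio hgu ⟨hgb, hFgb⟩ hSu hu
  have hlt : S u < g (u * b) := (div_lt_div_iff_of_pos_right hgu).1 hratio
  rw [div_le_iff₀' hu]
  calc F (S u) ≤ F (g (u * b)) := hF hSu hgb hlt.le
    _ = u * b := hFgb

theorem tendsto_comp_div (hg : IsRightInverseNearZero F g) (hF : MonotoneOn F (Set.Ici 0))
    (hF0 : F 0 = 0) (hRV : RegularlyVaryingAtZero g β) (hβ : 0 < β)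
    (hS0 : ∀ᶠ u in 𝓝[>] 0, 0 ≤ S u) (hS : Tendsto (fun u => S u / g u) (𝓝[>] 0) (𝓝 A)) :
    Tendsto (fun u => F (S u) / u) (𝓝[>] 0) (𝓝 (A ^ (1 / β))) := by
  have hA : 0 ≤ A := ge_of_tendsto hS <| by
    filter_upwards [hS0, hg.eventually_pos hF0] with u hSu hgu using div_nonneg hSu hgu.le
  rw [one_div]
  refine tendsto_order.2 ⟨fun a ha => ?_, fun c hc => ?_⟩
  · rcases lt_or_ge a 0 with ha0 | ha0
    · filter_upwards [hS0, self_mem_nhdsWithin] with u hSu hu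
      have hFS : 0 ≤ F (S u) := hF0 ▸ hF Set.self_mem_Ici hSu hSu
      exact ha0.trans_le (div_nonneg hFS (le_of_lt hu))
    · obtain ⟨b, hab, hbA⟩ := exists_between ha
      have hb : 0 < b := ha0.trans_lt hab
      exact (hg.eventually_le_comp_div hF hF0 hRV hS hb
        ((Real.lt_rpow_inv_iff_of_pos hb.le hA hβ).1 hbA)).mono fun _ => hab.trans_le
  · obtain ⟨b, hAb, hbc⟩ := exists_between hc
    have hb : 0 < b := (Real.rpow_nonneg hA _).trans_lt hAb
    exact (hg.eventually_comp_div_le hF hF0 hRV hS0 hS hb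
      ((Real.rpow_inv_lt_iff_of_pos hA hb.le hβ).1 hAb)).mono fun _ h => h.trans_lt hbc

end IsRightInverseNearZero

theorem isRightInverseNearZero_one_sub {φ φinv : ℝ → ℝ}
    (hinv : ∀ᶠ v in 𝓝[≤] 1, 0 ≤ φinv v ∧ φ (φinv v) = v) :
    IsRightInverseNearZero (fun t => 1 - φ t) (fun u => φinv (1 - u)) := by
  have hlim : Tendsto (fun u : ℝ => 1 - u) (𝓝[≥] 0) (𝓝[≤] 1) := by
    refine tendsto_nhdsWithin_iff.2 ⟨?_, ?_⟩
    · exact ((continuous_sub_left 1).tendsto' 0 1 (sub_zero 1)).mono_left nhdsWithin_le_nhds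
    · filter_upwards [self_mem_nhdsWithin] with u hu using sub_le_self (1 : ℝ) hu
  filter_upwards [hlim.eventually hinv] with u ⟨hnonneg, heq⟩
  exact ⟨hnonneg, sub_eq_of_eq_add' (by rw [heq, sub_add_cancel])⟩

/- Includes non-strict generators (zero from some point on), with `φinv` the pseudo-inverse. -/
theorem archimedean_upper_exponent_function_regularly_varying_general
    {φ φinv : ℝ → ℝ} {β : ℝ} {ι : Type*} {s : Finset ι} {w : ι → ℝ}
    (hanti : AntitoneOn φ (Set.Ici 0)) (hφ0 : φ 0 = 1)
    (hinv : ∀ᶠ v in 𝓝[≤] 1, 0 ≤ φinv v ∧ φ (φinv v) = v)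
    (hβ : 0 < β) (hRV : RegularlyVaryingAtZero (fun u => φinv (1 - u)) β)
    (hw : ∀ i ∈ s, 0 ≤ w i) :
    Tendsto (fun u => (1 - φ (∑ i ∈ s, φinv (1 - u * w i))) / u) (𝓝[>] 0)
      (𝓝 ((∑ i ∈ s, w i ^ β) ^ (1 / β))) := by
  have hF : MonotoneOn (fun t => 1 - φ t) (Set.Ici 0) :=
    fun _ ht _ ht' hle => sub_le_sub_left (hanti ht ht' hle) 1
  have hF0 : 1 - φ 0 = 0 := sub_eq_zero.2 hφ0.symm
  have hg := isRightInverseNearZero_one_sub hinv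
  exact hg.tendsto_comp_div hF hF0 hRV hβ (hg.eventually_sum_apply_mul_nonneg hw)
    (hg.tendsto_sum_apply_mul_div hF hF0 hRV hβ hw)

/-- Theorem 2.1(2): upper exponent function of an Archimedean copula whose
generator `φ⁻¹` is regularly varying at `1` with index `β > 0`. -/
theorem archimedean_upper_exponent_function_regularly_varying
    (φ φinv : ℝ → ℝ)
    (hcont : ContinuousOn φ (Set.Ici 0))
    (hanti : StrictAntiOn φ (Set.Ici 0))
    (hφ0 : φ 0 = 1)
    (hφtop : Tendsto φ atTop (𝓝 0))
    (hinv : ∀ u ∈ Set.Ioc (0:ℝ) 1, 0 ≤ φinv u ∧ φ (φinv u) = u)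
    (β : ℝ) (hβ : 0 < β)
    (hRV : ∀ x > (0:ℝ),
      Tendsto (fun u => φinv (1 - u * x) / φinv (1 - u)) (𝓝[>] (0:ℝ)) (𝓝 (x ^ β)))
    (d : ℕ) (hd : 2 ≤ d) (w : Fin d → ℝ) (hw : ∀ i, 0 ≤ w i) :
    Tendsto (fun u => (1 - φ (∑ i, φinv (1 - u * w i))) / u) (𝓝[>] (0:ℝ))
      (𝓝 ((∑ j, (w j) ^ β) ^ (1/β))) :=
  archimedean_upper_exponent_function_regularly_varying_general hanti.antitoneOn hφ0
    (mem_of_superset (Ioc_mem_nhdsLE one_pos) hinv) hβ hRV fun i _ => hw i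
end

section
/- Let φ: [0,∞) → ℝ be continuous and strictly decreasing with φ(0) = 1 and φ(t) → 0 as t → ∞, and suppose φ is slowly varying at ∞ (i.e. φ(λt)/φ(t) → 1 as t → ∞ for every λ > 0). Then for every λ > 1, φ⁻¹(λu)/φ⁻¹(u) → 0 as u → 0⁺. -/
open Filter Topology

/-!
Write `a = φ⁻¹(λu)` and `b = φ⁻¹(u)`, so that `φ a = λ φ b` with `λ > 1`, and `b → ∞` as `u → 0⁺`.
Slow variation at scale `ε` gives `φ (ε b) < λ φ b = φ a` once `b` is large, and monotonicity
turns this into `a < ε b`.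
-/

/-- A function `f : ℝ → ℝ` is slowly varying at `∞` if rescaling its argument by a positive
constant does not change it asymptotically. Measurability and positivity, often part of the
definition, are not imposed. Since `x / 0 = 0`, the limit `1` still forces `f t ≠ 0` for
large `t`. -/
def IsSlowlyVarying (f : ℝ → ℝ) : Prop :=
  ∀ c > 0, Tendsto (fun t => f (c * t) / f t) atTop (𝓝 1)

theorem tendsto_atTop_of_antitoneOn_of_tendsto_comp {α β ι : Type*} [LinearOrder α]
    [LinearOrder β] [TopologicalSpace β] [ClosedIciTopology β] {f : α → β} {a : α} {L : β}
    {l : Filter ι} {g : ι → α} (hf : AntitoneOn f (Set.Ici a)) (hL : ∀ t ≥ a, L < f t)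
    (hg : ∀ᶠ x in l, a ≤ g x) (hfg : Tendsto (fun x => f (g x)) l (𝓝 L)) :
    Tendsto g l atTop := by
  refine tendsto_atTop.2 fun T => ?_
  have hmax : a ≤ max T a := le_max_right T a
  filter_upwards [hg, hfg.eventually_lt_const (hL _ hmax)] with x hgx hlt
  exact (le_max_left T a).trans (hf.reflect_lt hgx hmax hlt).le

namespace IsSlowlyVarying

variable {f : ℝ → ℝ}

theorem eventually_ne_zero (hf : IsSlowlyVarying f) : ∀ᶠ t in atTop, f t ≠ 0 := by
  filter_upwards [(hf 1 one_pos).eventually_ne one_ne_zero] with t ht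
  exact (div_ne_zero_iff.1 ht).2

theorem pos_of_antitoneOn {a t : ℝ} (hf : IsSlowlyVarying f) (hanti : AntitoneOn f (Set.Ici a))
    (hlim : Tendsto f atTop (𝓝 0)) (ht : a ≤ t) : 0 < f t := by
  have nonneg : ∀ s ≥ a, 0 ≤ f s := fun s hs =>
    le_of_tendsto hlim <| (eventually_ge_atTop s).mono fun r hr => hanti hs (hs.trans hr) hr
  obtain ⟨s, hne, hts⟩ := (hf.eventually_ne_zero.and (eventually_ge_atTop t)).exists
  have has : a ≤ s := ht.trans hts
  exact ((nonneg s has).lt_of_ne' hne).trans_le (hanti ht has hts)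

theorem tendsto_div_zero_of_mul_le {ι : Type*} {l : Filter ι} {a b : ι → ℝ} {c : ℝ}
    (hf : IsSlowlyVarying f) (hanti : AntitoneOn f (Set.Ici 0)) (hpos : ∀ᶠ t in atTop, 0 < f t)
    (hc : 1 < c) (ha : ∀ᶠ x in l, 0 ≤ a x) (hb : Tendsto b l atTop)
    (hab : ∀ᶠ x in l, c * f (b x) ≤ f (a x)) :
    Tendsto (fun x => a x / b x) l (𝓝 0) := by
  have eventually_div_lt : ∀ ε > 0, ∀ᶠ x in l, a x / b x < ε := by
    intro ε hε
    have hratio := hb.eventually ((hf ε hε).eventually_lt_const hc)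
    filter_upwards [ha, hab, hratio, hb.eventually hpos, hb.eventually_gt_atTop 0]
      with x hax habx hratio hfbx hbx
    have hlt : f (ε * b x) < f (a x) := ((div_lt_iff₀ hfbx).1 hratio).trans_le habx
    exact (div_lt_iff₀ hbx).2 (hanti.reflect_lt (mul_pos hε hbx).le hax hlt)
  refine tendsto_order.2 ⟨fun δ hδ => ?_, eventually_div_lt⟩
  filter_upwards [ha, hb.eventually_ge_atTop 0] with x hax hbx
  exact hδ.trans_le (div_nonneg hax hbx)

end IsSlowlyVarying

theorem inverse_ratio_tendsto_zero_of_slowly_varying_general {φ ψ : ℝ → ℝ} {c : ℝ}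
    (hanti : AntitoneOn φ (Set.Ici 0)) (hlim : Tendsto φ atTop (𝓝 0))
    (hinv : ∀ᶠ u in 𝓝[>] 0, 0 ≤ ψ u ∧ φ (ψ u) = u) (hSV : IsSlowlyVarying φ) (hc : 1 < c) :
    Tendsto (fun u => ψ (c * u) / ψ u) (𝓝[>] 0) (𝓝 0) := by
  have hpos : ∀ t ≥ 0, 0 < φ t := fun t ht => hSV.pos_of_antitoneOn hanti hlim ht
  have hφψ : Tendsto (fun u => φ (ψ u)) (𝓝[>] 0) (𝓝 0) :=
    (tendsto_id.mono_left nhdsWithin_le_nhds).congr' (hinv.mono fun u hu => hu.2.symm)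
  have hψ : Tendsto ψ (𝓝[>] 0) atTop :=
    tendsto_atTop_of_antitoneOn_of_tendsto_comp hanti hpos (hinv.mono fun u hu => hu.1) hφψ
  have hinv_scaled : ∀ᶠ u in 𝓝[>] 0, 0 ≤ ψ (c * u) ∧ φ (ψ (c * u)) = c * u :=
    eventually_nhdsGT_zero_mul_left (one_pos.trans hc) hinv
  refine hSV.tendsto_div_zero_of_mul_le hanti ((eventually_ge_atTop 0).mono hpos) hc
    (hinv_scaled.mono fun u hu => hu.1) hψ ?_
  filter_upwards [hinv, hinv_scaled] with u hu hcu
  rw [hu.2, hcu.2]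

/-- If the Laplace transform `φ` is slowly varying at `∞`, then its inverse
satisfies `φ⁻¹(λu)/φ⁻¹(u) → 0` as `u → 0⁺`, for every `λ > 1`. -/
theorem inverse_ratio_tendsto_zero_of_slowly_varying
    (φ φinv : ℝ → ℝ)
    (hcont : ContinuousOn φ (Set.Ici 0))
    (hanti : StrictAntiOn φ (Set.Ici 0))
    (hφ0 : φ 0 = 1)
    (hφtop : Tendsto φ atTop (𝓝 0))
    (hinv : ∀ u ∈ Set.Ioc (0:ℝ) 1, 0 ≤ φinv u ∧ φ (φinv u) = u)
    (hSV : ∀ lam > (0:ℝ), Tendsto (fun t => φ (lam * t) / φ t) atTop (𝓝 1)) :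
    ∀ lam > (1:ℝ),
      Tendsto (fun u => φinv (lam * u) / φinv u) (𝓝[>] (0:ℝ)) (𝓝 0) := fun _ hlam =>
  inverse_ratio_tendsto_zero_of_slowly_varying_general hanti.antitoneOn hφtop
    (eventually_of_mem (Ioc_mem_nhdsGT one_pos) hinv) hSV hlam
end

section
/- Let φ(x) = 1/log(x+e) for x ≥ 0, so that φ⁻¹(u) = e^{1/u} − e for 0 < u ≤ 1. Then for all w₁ > 0 and w₂ > 0, lim_{u→0⁺} φ(φ⁻¹(u·w₁) + φ⁻¹(u·w₂)) / u = min{w₁, w₂}; equivalently, lim_{u→0⁺} (1 / log(e^{1/(u w₁)} + e^{1/(u w₂)} − e)) / u = min{w₁, w₂}. -/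
open Filter Topology

/-!
For small temperature `u`, the sum `exp (x / u) + exp (y / u)` is comparable to its larger summand
`exp (max x y / u)`, which also dwarfs any constant as soon as `max x y > 0`. Taking logarithms
turns the bounded factor into a bounded error, and multiplication by `u` kills that error.
With `x = w₁⁻¹` and `y = w₂⁻¹`, the maximum of the inverses is the inverse of the minimum.
-/

lemma abs_log_exp_add_exp_sub_sub_max_le {s t c : ℝ} (hc : 2 * |c| ≤ Real.exp (max s t)) :
    |Real.log (Real.exp s + Real.exp t - c) - max s t| ≤ Real.log 3 := by
  have hs : Real.exp s ≤ Real.exp (max s t) := Real.exp_le_exp.mpr (le_max_left s t)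
  have ht : Real.exp t ≤ Real.exp (max s t) := Real.exp_le_exp.mpr (le_max_right s t)
  have hmax : Real.exp (max s t) ≤ Real.exp s + Real.exp t := by
    rw [Real.exp_monotone.map_max]
    exact max_le_add_of_nonneg (Real.exp_nonneg s) (Real.exp_nonneg t)
  have hc_neg : -|c| ≤ c := neg_abs_le c
  have hc_pos : c ≤ |c| := le_abs_self c
  have hmax_pos : 0 < Real.exp (max s t) := Real.exp_pos _
  have hpos : 0 < Real.exp s + Real.exp t - c := by linarith
  rw [abs_sub_le_iff, sub_le_iff_le_add, sub_le_comm]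
  constructor
  · rw [Real.log_le_iff_le_exp hpos, Real.exp_add, Real.exp_log three_pos]
    linarith
  · rw [Real.le_log_iff_exp_le hpos, Real.exp_sub, Real.exp_log three_pos]
    linarith

lemma tendsto_mul_log_exp_div_add_exp_div_sub {x y : ℝ} (hxy : 0 < max x y) (c : ℝ) :
    Tendsto (fun u ↦ u * Real.log (Real.exp (x / u) + Real.exp (y / u) - c))
      (𝓝[>] 0) (𝓝 (max x y)) := by
  have hexp : Tendsto (fun u ↦ Real.exp (max x y / u)) (𝓝[>] 0) atTop :=
    Real.tendsto_exp_atTop.comp (tendsto_inv_nhdsGT_zero.const_mul_atTop hxy)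
  have herror : Tendsto (fun u : ℝ ↦ u * Real.log 3) (𝓝[>] 0) (𝓝 0) :=
    ((continuous_mul_const (Real.log 3)).tendsto' 0 0 (zero_mul _)).mono_left nhdsWithin_le_nhds
  rw [tendsto_iff_dist_tendsto_zero]
  refine squeeze_zero' (.of_forall fun _ ↦ dist_nonneg) ?_ herror
  filter_upwards [hexp.eventually_ge_atTop (2 * |c|), self_mem_nhdsWithin] with u hc hu
  have hu : 0 < u := hu
  have hmax : max (x / u) (y / u) = max x y / u := max_div_div_right hu.le x y
  calc dist (u * Real.log (Real.exp (x / u) + Real.exp (y / u) - c)) (max x y)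
      = |u * (Real.log (Real.exp (x / u) + Real.exp (y / u) - c) - max x y / u)| := by
        rw [Real.dist_eq, mul_sub, mul_div_cancel₀ _ hu.ne']
    _ = u * |Real.log (Real.exp (x / u) + Real.exp (y / u) - c) - max (x / u) (y / u)| := by
        rw [abs_mul, abs_of_pos hu, hmax]
    _ ≤ u * Real.log 3 := by
        gcongr
        exact abs_log_exp_add_exp_sub_sub_max_le (hmax ▸ hc)

/-- Example 2.6: for `φ(x) = 1/log(x+e)`, with inverse `φ⁻¹(u) = e^(1/u) - e`,
the lower tail dependence function of the associated bivariate Archimedean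
copula is `min{w₁, w₂}`. -/
theorem archimedean_log_generator_tail_dependence
    (w₁ w₂ : ℝ) (hw₁ : 0 < w₁) (hw₂ : 0 < w₂) :
    Tendsto
      (fun u => (1 / Real.log
        (Real.exp (1 / (u * w₁)) + Real.exp (1 / (u * w₂)) - Real.exp 1)) / u)
      (𝓝[>] (0:ℝ)) (𝓝 (min w₁ w₂)) := by
  have hpos : 0 < max w₁⁻¹ w₂⁻¹ := lt_max_of_lt_left (inv_pos.mpr hw₁)
  have hmax : (max w₁⁻¹ w₂⁻¹)⁻¹ = min w₁ w₂ :=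
    inv_eq_iff_eq_inv.mpr (inv_antitoneOn_Ioi.map_min hw₁ hw₂).symm
  have hlim := (tendsto_mul_log_exp_div_add_exp_div_sub hpos (Real.exp 1)).inv₀ hpos.ne'
  rw [hmax] at hlim
  refine hlim.congr fun u ↦ ?_
  simp only [mul_inv_rev, div_eq_mul_inv, one_mul]
end

section
/- Let φ: [0,∞) → ℝ be continuous and strictly decreasing with φ(0) = 1 and φ(t) → 0 as t → ∞. Suppose φ ∈ Γ_α(g) for some α > 0, where g: [0,∞) → (0,∞) is self-neglecting and ultimately decreasing, and suppose that for some integer d ≥ 2 and some real k with 1 ≤ k ≤ d, lim_{t→∞} φ(t·d)/φ(t)^k = τ for some τ > 0. Then lim_{t→∞} g(t)/g(t·d) = k/d. -/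
open Filter Topology

/-!
Since `φ (c t) ∼ τ φ(t)^k`, the step `t ↦ t + g t`, which multiplies `φ` by about `e^{-α}`,
becomes on the dilated scale the step `c t ↦ c t + c g t`, which multiplies `φ` by about
`e^{-α k}`. By monotonicity, membership in `Γ_α(g)` can be inverted: a step from `c t` with this
effect must be about `k g (c t)` long. Hence `c g t ∼ k g (c t)`.
-/

/-- The class `Γ_α(g)` of functions decaying at rate `α` on the local scale `g`. Only the
limit relation is recorded; positivity of `φ` and `g` and the self-neglecting property of the
auxiliary function `g` are not part of the definition. -/
def MemGammaClass (α : ℝ) (g φ : ℝ → ℝ) : Prop :=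
  ∀ x : ℝ, Tendsto (fun t => φ (t + x * g t) / φ t) atTop (𝓝 (Real.exp (-α * x)))

theorem tendsto_div_of_tendsto_div_rpow {ι X : Type*} {l : Filter ι} {F : Filter X}
    {φ ψ : X → ℝ} {u v : ι → X} {k τ ρ : ℝ} (hφ : ∀ᶠ t in F, 0 < φ t) (hτ : τ ≠ 0)
    (hψ : Tendsto (fun t => ψ t / φ t ^ k) F (𝓝 τ)) (hu : Tendsto u l F) (hv : Tendsto v l F)
    (hk : 0 ≤ k) (huv : Tendsto (fun i => φ (u i) / φ (v i)) l (𝓝 ρ)) :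
    Tendsto (fun i => ψ (u i) / ψ (v i)) l (𝓝 (ρ ^ k)) := by
  have hlim : Tendsto
      (fun i => ψ (u i) / φ (u i) ^ k / (ψ (v i) / φ (v i) ^ k) * (φ (u i) / φ (v i)) ^ k)
      l (𝓝 (τ / τ * ρ ^ k)) :=
    ((hψ.comp hu).div (hψ.comp hv) hτ).mul (huv.rpow_const (.inr hk))
  rw [div_self hτ, one_mul] at hlim
  refine hlim.congr' ?_
  filter_upwards [hu.eventually hφ, hv.eventually hφ] with i hui hvi
  have hui' : φ (u i) ^ k ≠ 0 := (Real.rpow_pos_of_pos hui k).ne'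
  have hvi' : φ (v i) ^ k ≠ 0 := (Real.rpow_pos_of_pos hvi k).ne'
  rw [Real.div_rpow hui.le hvi.le]
  field_simp

namespace MemGammaClass

variable {φ g : ℝ → ℝ} {α a : ℝ}

theorem eventually_pos (hφ : MemGammaClass α g φ) (hα : 0 < α)
    (hanti : AntitoneOn φ (Set.Ici a)) (hg : ∀ᶠ t in atTop, 0 < g t) :
    ∀ᶠ t in atTop, 0 < φ t := by
  have hlt_one : Real.exp (-α * 1) < 1 := by simpa using hα
  filter_upwards [(hφ 1).eventually_const_lt (Real.exp_pos _), (hφ 1).eventually_lt_const hlt_one,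
    hg, eventually_ge_atTop a] with t hratio_pos hratio_lt hgt hat
  have hle : φ (t + 1 * g t) ≤ φ t :=
    hanti (Set.mem_Ici.2 hat) (Set.mem_Ici.2 (by linarith)) (by linarith)
  by_contra! hnonpos
  have hneg : φ t < 0 := hnonpos.lt_of_ne fun h => by simp [h] at hratio_pos
  exact hratio_lt.not_ge ((one_le_div_of_neg hneg).2 hle)

theorem tendsto_div_of_tendsto_add_div (hφ : MemGammaClass α g φ) (hα : 0 < α)
    (hanti : AntitoneOn φ (Set.Ici a)) (hg : ∀ᶠ t in atTop, 0 < g t)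
    {ι : Type*} {l : Filter ι} {s h : ι → ℝ} {x : ℝ} (hx : 0 ≤ x) (hs : Tendsto s l atTop)
    (hh : ∀ᶠ i in l, 0 ≤ h i)
    (hlim : Tendsto (fun i => φ (s i + h i) / φ (s i)) l (𝓝 (Real.exp (-α * x)))) :
    Tendsto (fun i => h i / g (s i)) l (𝓝 x) := by
  have hs_pos : ∀ᶠ i in l, a ≤ s i ∧ 0 < φ (s i) ∧ 0 < g (s i) :=
    hs.eventually ((eventually_ge_atTop a).and ((hφ.eventually_pos hα hanti hg).and hg))
  have step_lt {r p q : ℝ} (hr : a ≤ r) (hφr : 0 < φ r) (hp : 0 ≤ p) (hq : 0 ≤ q)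
      (hpq : φ (r + p) / φ r < φ (r + q) / φ r) : q < p :=
    lt_of_add_lt_add_left <| hanti.reflect_lt (Set.mem_Ici.2 (by linarith))
      (Set.mem_Ici.2 (by linarith)) ((div_lt_div_iff_of_pos_right hφr).1 hpq)
  refine tendsto_order.2 ⟨fun y hy => ?_, fun y hy => ?_⟩
  · have hexp : Real.exp (-α * x) < Real.exp (-α * y) :=
      Real.exp_lt_exp.2 (mul_lt_mul_of_neg_left hy (neg_neg_of_pos hα))
    filter_upwards [hlim.eventually_lt ((hφ y).comp hs) hexp, hs_pos, hh]
      with i hi ⟨hsi, hφi, hgi⟩ hhi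
    rw [lt_div_iff₀ hgi]
    rcases lt_or_ge (y * g (s i)) 0 with hneg | hnonneg
    · exact hneg.trans_le hhi
    · exact step_lt hsi hφi hhi hnonneg hi
  · have hexp : Real.exp (-α * y) < Real.exp (-α * x) :=
      Real.exp_lt_exp.2 (mul_lt_mul_of_neg_left hy (neg_neg_of_pos hα))
    filter_upwards [((hφ y).comp hs).eventually_lt hlim hexp, hs_pos, hh]
      with i hi ⟨hsi, hφi, hgi⟩ hhi
    rw [div_lt_iff₀ hgi]
    by_contra! hle
    exact hle.not_gt (step_lt hsi hφi (mul_nonneg (hx.trans hy.le) hgi.le) hhi hi)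

end MemGammaClass

theorem gamma_class_ratio_limit_general {φ g : ℝ → ℝ} {α a c k τ : ℝ}
    (hanti : AntitoneOn φ (Set.Ici a)) (hg : ∀ᶠ t in atTop, 0 < g t) (hα : 0 < α)
    (hφ : MemGammaClass α g φ) (hc : 0 < c) (hk : 0 ≤ k) (hτ : τ ≠ 0)
    (hratio : Tendsto (fun t => φ (t * c) / φ t ^ k) atTop (𝓝 τ)) :
    Tendsto (fun t => g t / g (t * c)) atTop (𝓝 (k / c)) := by
  have hstep : Tendsto (fun t => t + 1 * g t) atTop atTop :=
    tendsto_atTop_mono' _ (hg.mono fun t ht => by simpa using ht.le) tendsto_id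
  have hdecay : Tendsto (fun t => φ (t * c + c * g t) / φ (t * c)) atTop
      (𝓝 (Real.exp (-α * k))) := by
    convert tendsto_div_of_tendsto_div_rpow (ψ := fun t => φ (t * c))
      (hφ.eventually_pos hα hanti hg) hτ hratio hstep tendsto_id hk
      (hφ 1) using 2
    · simp only [id]
      ring_nf
    · rw [← Real.exp_mul, mul_one]
  have hlim : Tendsto (fun t => c * g t / g (t * c)) atTop (𝓝 k) :=
    hφ.tendsto_div_of_tendsto_add_div hα hanti hg hk (tendsto_id.atTop_mul_const hc)
      (hg.mono fun t ht => (mul_pos hc ht).le) hdecay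
  refine (hlim.div_const c).congr fun t => ?_
  field_simp

/-- Step in Theorem 3.3: under `φ ∈ Γ_α(g)` with `g` self-neglecting and
ultimately decreasing, the condition `φ(td)/φ(t)^k → τ > 0` forces
`g(t)/g(td) → k/d`. -/
theorem gamma_class_ratio_limit
    (φ g : ℝ → ℝ)
    (hcont : ContinuousOn φ (Set.Ici 0))
    (hanti : StrictAntiOn φ (Set.Ici 0))
    (hφ0 : φ 0 = 1)
    (hφtop : Tendsto φ atTop (𝓝 0))
    (hgpos : ∀ t ≥ (0:ℝ), 0 < g t)
    (hsn1 : Tendsto (fun t => g t / t) atTop (𝓝 0))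
    (hsn2 : ∀ x : ℝ, Tendsto (fun t => g (t + x * g t) / g t) atTop (𝓝 1))
    (hgdec : ∃ T ≥ (0:ℝ), AntitoneOn g (Set.Ici T))
    (α : ℝ) (hα : 0 < α)
    (hGamma : ∀ x : ℝ,
      Tendsto (fun t => φ (t + x * g t) / φ t) atTop (𝓝 (Real.exp (-α * x))))
    (d : ℕ) (hd : 2 ≤ d) (k : ℝ) (hk1 : 1 ≤ k) (hkd : k ≤ d)
    (τ : ℝ) (hτ : 0 < τ)
    (hratio : Tendsto (fun t => φ (t * d) / (φ t) ^ k) atTop (𝓝 τ)) :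
    Tendsto (fun t => g t / g (t * d)) atTop (𝓝 (k / d)) := by
  have hd_pos : (0 : ℝ) < d := by positivity
  exact gamma_class_ratio_limit_general hanti.antitoneOn ((eventually_ge_atTop 0).mono hgpos) hα
    hGamma hd_pos (zero_le_one.trans hk1) hτ.ne' hratio
end

section
/- Let φ: [0,∞) → ℝ be continuous and strictly decreasing with φ(0) = 1 and φ(t) → 0 as t → ∞. Suppose φ ∈ Γ_α(g) for some α > 0, where g: [0,∞) → (0,∞) is self-neglecting and ultimately decreasing, and suppose that for some integer d ≥ 2 and some real k with 1 ≤ k ≤ d, lim_{t→∞} φ(t·d)/φ(t)^k = τ for some τ > 0. Then for every w = (w₁, …, w_d) ∈ (0,∞)^d, lim_{u→0⁺} φ(∑_{i=1}^d φ⁻¹(u·wᵢ)) / u^k = τ · ∏_{i=1}^d wᵢ^{k/d}. -/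
/-!
Put `t = φ⁻¹ u` and `sᵢ = φ⁻¹ (u wᵢ)`. Since `φ sᵢ / φ t = wᵢ`, inverting the defining relation of
`Γ_α(g)` gives `sᵢ = t + (-log wᵢ / α + o(1)) g(t)`, so the mean of the `sᵢ` is `t + y g(t)` with
`y → Y = -∑ log wᵢ / (α d)`. As `∑ sᵢ` is `d` times this mean, the hypothesis on
`φ (t d) / φ t ^ k` yields `φ (∑ sᵢ) ∼ τ φ (t + y g(t)) ^ k ∼ τ (exp (-α Y) u) ^ k`.
-/

open Filter Topology

/-- The class `Γ_α(g)` of de Haan: `φ` decays by the factor `exp (-α x)` when its argument is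
shifted by `x` units of the local scale `g`. -/
def GammaVarying (φ g : ℝ → ℝ) (α : ℝ) : Prop :=
  ∀ x : ℝ, Tendsto (fun t => φ (t + x * g t) / φ t) atTop (𝓝 (Real.exp (-α * x)))

section RightInverse

variable {X Y : Type*} [LinearOrder X] [LinearOrder Y] [TopologicalSpace Y]
  {φ : X → Y} {ψ : Y → X} {a : X} {b : Y}

theorem lt_of_strictAntiOn_Ici_of_tendsto_atTop [NoMaxOrder X] [ClosedIicTopology Y]
    (hφ : StrictAntiOn φ (Set.Ici a)) (hlim : Tendsto φ atTop (𝓝 b)) {t : X} (ht : a ≤ t) :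
    b < φ t := by
  have : Nonempty X := ⟨a⟩
  obtain ⟨t', htt'⟩ := exists_gt t
  have ht' : a ≤ t' := ht.trans htt'.le
  have hle : b ≤ φ t' := by
    refine le_of_tendsto hlim ?_
    filter_upwards [eventually_ge_atTop t'] with s hs
    exact hφ.antitoneOn ht' (ht'.trans hs) hs
  exact hle.trans_lt (hφ ht ht' htt')

theorem tendsto_rightInverse_atTop_of_antitoneOn [ClosedIciTopology Y]
    (hφ : AntitoneOn φ (Set.Ici a)) (hb : ∀ t ≥ a, b < φ t)
    (hψ : ∀ᶠ u in 𝓝[>] b, a ≤ ψ u ∧ φ (ψ u) = u) : Tendsto ψ (𝓝[>] b) atTop := by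
  refine tendsto_atTop.2 fun M => ?_
  have hM : a ≤ max M a := le_max_right M a
  filter_upwards [hψ, Ioo_mem_nhdsGT (hb _ hM)] with u ⟨hau, hu⟩ hlt
  by_contra! h
  have hle : φ (max M a) ≤ φ (ψ u) := hφ hau hM (h.le.trans (le_max_left M a))
  exact hlt.2.not_ge (hu ▸ hle)

theorem eventually_lt_of_tendsto_rightInverse [(𝓝[>] b).NeBot] (hφ : AntitoneOn φ (Set.Ici a))
    (hψ : Tendsto ψ (𝓝[>] b) atTop) (hφψ : ∀ᶠ u in 𝓝[>] b, φ (ψ u) = u) :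
    ∀ᶠ t in atTop, b < φ t := by
  filter_upwards [eventually_ge_atTop a] with t ht
  obtain ⟨u, htu, hu, hbu⟩ :=
    ((hψ.eventually_ge_atTop t).and (hφψ.and eventually_mem_nhdsWithin)).exists
  calc b < φ (ψ u) := hu.symm ▸ hbu
    _ ≤ φ t := hφ ht (ht.trans htu) htu

end RightInverse

theorem tendsto_add_mul_atTop_of_tendsto_div {β 𝕜 : Type*} [Field 𝕜] [LinearOrder 𝕜]
    [IsStrictOrderedRing 𝕜] [TopologicalSpace 𝕜] [OrderTopology 𝕜] {l : Filter β} {g : 𝕜 → 𝕜}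
    {t y : β → 𝕜} {Y : 𝕜} (hg : Tendsto (fun t => g t / t) atTop (𝓝 0))
    (ht : Tendsto t l atTop) (hy : Tendsto y l (𝓝 Y)) :
    Tendsto (fun b => t b + y b * g (t b)) l atTop := by
  have hfactor : Tendsto (fun b => 1 + y b * (g (t b) / t b)) l (𝓝 1) := by
    simpa using (hy.mul (hg.comp ht)).const_add 1
  refine (ht.atTop_mul_pos one_pos hfactor).congr' ?_
  filter_upwards [ht.eventually_gt_atTop 0] with b hb
  field_simp

theorem prod_rpow_div_eq_exp_rpow {ι : Type*} {I : Finset ι} {w : ι → ℝ}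
    (hw : ∀ i ∈ I, 0 < w i) {α : ℝ} (hα : α ≠ 0) (c k : ℝ) :
    ∏ i ∈ I, w i ^ (k / c) = Real.exp (-α * ((∑ i ∈ I, -Real.log (w i) / α) / c)) ^ k := by
  rw [Finset.prod_congr rfl fun i hi => Real.rpow_def_of_pos (hw i hi) (k / c),
    ← Real.exp_sum, ← Finset.sum_mul, ← Real.exp_mul, ← Finset.sum_div, Finset.sum_neg_distrib]
  congr 1
  field_simp

namespace GammaVarying

variable {β : Type*} {l : Filter β} {φ g : ℝ → ℝ} {t s y : β → ℝ} {α T Y : ℝ}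

theorem tendsto_comp_add_mul_div (h : GammaVarying φ g α) (hφ : AntitoneOn φ (Set.Ici T))
    (hpos : ∀ᶠ t in atTop, 0 < φ t) (hgpos : ∀ᶠ t in atTop, 0 < g t)
    (hg : Tendsto (fun t => g t / t) atTop (𝓝 0))
    (ht : Tendsto t l atTop) (hy : Tendsto y l (𝓝 Y)) :
    Tendsto (fun b => φ (t b + y b * g (t b)) / φ (t b)) l (𝓝 (Real.exp (-α * Y))) := by
  have hexp : Tendsto (fun x => Real.exp (-α * x)) (𝓝 Y) (𝓝 (Real.exp (-α * Y))) :=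
    Continuous.tendsto (by fun_prop) Y
  have hty := (tendsto_add_mul_atTop_of_tendsto_div hg ht hy).eventually_ge_atTop T
  have htx (x : ℝ) : ∀ᶠ b in l, T ≤ t b + x * g (t b) :=
    (tendsto_add_mul_atTop_of_tendsto_div hg ht tendsto_const_nhds).eventually_ge_atTop T
  refine tendsto_order.2 ⟨fun c hc => ?_, fun c hc => ?_⟩
  · obtain ⟨x, hcx, hYx⟩ := (((hexp.mono_left nhdsWithin_le_nhds).eventually_const_lt hc).and
      (eventually_mem_nhdsWithin (s := Set.Ioi Y))).exists
    filter_upwards [ht.eventually hpos, ht.eventually hgpos, hty, htx x,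
      hy.eventually_lt_const hYx, ht.eventually ((h x).eventually_const_lt hcx)]
      with b hφb hgb hyb hxb hyx hlt
    refine hlt.trans_le ?_
    gcongr
    exact hφ hyb hxb (by gcongr)
  · obtain ⟨x, hxc, hxY⟩ := (((hexp.mono_left nhdsWithin_le_nhds).eventually_lt_const hc).and
      (eventually_mem_nhdsWithin (s := Set.Iio Y))).exists
    filter_upwards [ht.eventually hpos, ht.eventually hgpos, hty, htx x,
      hy.eventually_const_lt hxY, ht.eventually ((h x).eventually_lt_const hxc)]
      with b hφb hgb hyb hxb hxy hlt
    refine lt_of_le_of_lt ?_ hlt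
    gcongr
    exact hφ hxb hyb (by gcongr)

theorem tendsto_sub_div (h : GammaVarying φ g α) (hα : 0 < α) (hφ : AntitoneOn φ (Set.Ici T))
    (hpos : ∀ᶠ t in atTop, 0 < φ t) (hgpos : ∀ᶠ t in atTop, 0 < g t)
    (hg : Tendsto (fun t => g t / t) atTop (𝓝 0)) (ht : Tendsto t l atTop)
    (hs : Tendsto s l atTop) {v : ℝ} (hv : 0 < v)
    (hst : Tendsto (fun b => φ (s b) / φ (t b)) l (𝓝 v)) :
    Tendsto (fun b => (s b - t b) / g (t b)) l (𝓝 (-Real.log v / α)) := by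
  have htx (x : ℝ) : ∀ᶠ b in l, T ≤ t b + x * g (t b) :=
    (tendsto_add_mul_atTop_of_tendsto_div hg ht tendsto_const_nhds).eventually_ge_atTop T
  refine tendsto_order.2 ⟨fun x hx => ?_, fun x hx => ?_⟩
  · have hvx : v < Real.exp (-α * x) := by
      rw [← Real.log_lt_iff_lt_exp hv]
      linarith [(lt_div_iff₀ hα).1 hx]
    filter_upwards [ht.eventually hpos, ht.eventually hgpos, hs.eventually_ge_atTop T, htx x,
      hst.eventually_lt ((h x).comp ht) hvx] with b hφb hgb hsb hxb hlt
    have : t b + x * g (t b) < s b :=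
      hφ.reflect_lt hsb hxb ((div_lt_div_iff_of_pos_right hφb).1 hlt)
    rw [lt_div_iff₀ hgb]
    linarith
  · have hxv : Real.exp (-α * x) < v := by
      rw [← Real.lt_log_iff_exp_lt hv]
      linarith [(div_lt_iff₀ hα).1 hx]
    filter_upwards [ht.eventually hpos, ht.eventually hgpos, hs.eventually_ge_atTop T, htx x,
      ((h x).comp ht).eventually_lt hst hxv] with b hφb hgb hsb hxb hlt
    have : s b < t b + x * g (t b) :=
      hφ.reflect_lt hxb hsb ((div_lt_div_iff_of_pos_right hφb).1 hlt)
    rw [div_lt_iff₀ hgb]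
    linarith

theorem tendsto_comp_mul_div_rpow (h : GammaVarying φ g α) (hφ : AntitoneOn φ (Set.Ici T))
    (hpos : ∀ᶠ t in atTop, 0 < φ t) (hgpos : ∀ᶠ t in atTop, 0 < g t)
    (hg : Tendsto (fun t => g t / t) atTop (𝓝 0)) {c k τ : ℝ}
    (hratio : Tendsto (fun t => φ (t * c) / φ t ^ k) atTop (𝓝 τ))
    (ht : Tendsto t l atTop) (hy : Tendsto y l (𝓝 Y)) :
    Tendsto (fun b => φ ((t b + y b * g (t b)) * c) / φ (t b) ^ k) l
      (𝓝 (τ * Real.exp (-α * Y) ^ k)) := by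
  have hty := tendsto_add_mul_atTop_of_tendsto_div hg ht hy
  have hpow := (h.tendsto_comp_add_mul_div hφ hpos hgpos hg ht hy).rpow_const (p := k)
    (Or.inl (Real.exp_pos _).ne')
  refine ((hratio.comp hty).mul hpow).congr' ?_
  filter_upwards [ht.eventually hpos, hty.eventually hpos] with b hφb hφyb
  simp only [Function.comp_apply]
  rw [Real.div_rpow hφyb.le hφb.le, div_mul_div_cancel₀ (Real.rpow_pos_of_pos hφyb k).ne']

theorem tendsto_comp_sum_div_rpow {ι : Type*} [Fintype ι] [Nonempty ι]
    (h : GammaVarying φ g α) (hα : 0 < α) (hφ : AntitoneOn φ (Set.Ici T))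
    (hpos : ∀ᶠ t in atTop, 0 < φ t) (hgpos : ∀ᶠ t in atTop, 0 < g t)
    (hg : Tendsto (fun t => g t / t) atTop (𝓝 0)) {k τ : ℝ}
    (hratio : Tendsto (fun t => φ (t * Fintype.card ι) / φ t ^ k) atTop (𝓝 τ))
    (ht : Tendsto t l atTop) {s : ι → β → ℝ} (hs : ∀ i, Tendsto (s i) l atTop)
    {w : ι → ℝ} (hw : ∀ i, 0 < w i)
    (hst : ∀ i, Tendsto (fun b => φ (s i b) / φ (t b)) l (𝓝 (w i))) :
    Tendsto (fun b => φ (∑ i, s i b) / φ (t b) ^ k) l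
      (𝓝 (τ * ∏ i, w i ^ (k / Fintype.card ι))) := by
  have hmean : Tendsto (fun b => (∑ i, (s i b - t b) / g (t b)) / Fintype.card ι) l
      (𝓝 ((∑ i, -Real.log (w i) / α) / Fintype.card ι)) :=
    (tendsto_finsetSum _ fun i _ =>
      h.tendsto_sub_div hα hφ hpos hgpos hg ht (hs i) (hw i) (hst i)).div_const _
  rw [prod_rpow_div_eq_exp_rpow (fun i _ => hw i) hα.ne']
  refine (h.tendsto_comp_mul_div_rpow hφ hpos hgpos hg hratio ht hmean).congr' ?_
  filter_upwards [ht.eventually hgpos] with b hgb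
  congr 2
  rw [← Finset.sum_div, Finset.sum_sub_distrib, Finset.sum_const, Finset.card_univ, nsmul_eq_mul]
  field_simp
  ring

end GammaVarying

theorem archimedean_tail_dependence_rapidly_varying_general {ι : Type*} [Fintype ι] [Nonempty ι]
    {φ ψ g : ℝ → ℝ} {T α k τ : ℝ} (hφ : AntitoneOn φ (Set.Ici T))
    (hψ : Tendsto ψ (𝓝[>] (0 : ℝ)) atTop) (hφψ : ∀ᶠ u in 𝓝[>] (0 : ℝ), φ (ψ u) = u)
    (hgpos : ∀ᶠ t in atTop, 0 < g t) (hg : Tendsto (fun t => g t / t) atTop (𝓝 0))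
    (hα : 0 < α) (hΓ : GammaVarying φ g α)
    (hratio : Tendsto (fun t => φ (t * Fintype.card ι) / φ t ^ k) atTop (𝓝 τ))
    {w : ι → ℝ} (hw : ∀ i, 0 < w i) :
    Tendsto (fun u => φ (∑ i, ψ (u * w i)) / u ^ k) (𝓝[>] (0 : ℝ))
      (𝓝 (τ * ∏ i, w i ^ (k / Fintype.card ι))) := by
  have hscale (i : ι) : Tendsto (fun u => u * w i) (𝓝[>] (0 : ℝ)) (𝓝[>] 0) := by
    simpa only [id, zero_mul] using
      TendstoNhdsWithinIoi.mul_const (hw i) (tendsto_id (x := 𝓝[>] (0 : ℝ)))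
  have hst (i : ι) : Tendsto (fun u => φ (ψ (u * w i)) / φ (ψ u)) (𝓝[>] (0 : ℝ)) (𝓝 (w i)) := by
    refine tendsto_const_nhds.congr' ?_
    filter_upwards [hφψ, (hscale i).eventually hφψ, eventually_mem_nhdsWithin] with u hu huw hupos
    rw [hu, huw, mul_div_cancel_left₀ _ (Set.mem_Ioi.1 hupos).ne']
  have hpos := eventually_lt_of_tendsto_rightInverse hφ hψ hφψ
  refine (hΓ.tendsto_comp_sum_div_rpow hα hφ hpos hgpos hg hratio hψ
    (fun i => hψ.comp (hscale i)) hw hst).congr' ?_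
  filter_upwards [hφψ] with u hu
  simp only [hu, Function.comp_apply]

/-- Theorem 3.3: `k`-th order lower tail dependence of an Archimedean copula
whose Laplace transform `φ ∈ Γ_α(g)` is rapidly varying. -/
theorem archimedean_tail_dependence_rapidly_varying
    (φ φinv g : ℝ → ℝ)
    (hcont : ContinuousOn φ (Set.Ici 0))
    (hanti : StrictAntiOn φ (Set.Ici 0))
    (hφ0 : φ 0 = 1)
    (hφtop : Tendsto φ atTop (𝓝 0))
    (hinv : ∀ u ∈ Set.Ioc (0:ℝ) 1, 0 ≤ φinv u ∧ φ (φinv u) = u)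
    (hgpos : ∀ t ≥ (0:ℝ), 0 < g t)
    (hsn1 : Tendsto (fun t => g t / t) atTop (𝓝 0))
    (hsn2 : ∀ x : ℝ, Tendsto (fun t => g (t + x * g t) / g t) atTop (𝓝 1))
    (hgdec : ∃ T ≥ (0:ℝ), AntitoneOn g (Set.Ici T))
    (α : ℝ) (hα : 0 < α)
    (hGamma : ∀ x : ℝ,
      Tendsto (fun t => φ (t + x * g t) / φ t) atTop (𝓝 (Real.exp (-α * x))))
    (d : ℕ) (hd : 2 ≤ d) (k : ℝ) (hk1 : 1 ≤ k) (hkd : k ≤ d)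
    (τ : ℝ) (hτ : 0 < τ)
    (hratio : Tendsto (fun t => φ (t * d) / (φ t) ^ k) atTop (𝓝 τ))
    (w : Fin d → ℝ) (hw : ∀ i, 0 < w i) :
    Tendsto (fun u => φ (∑ i, φinv (u * w i)) / u ^ k) (𝓝[>] (0:ℝ))
      (𝓝 (τ * ∏ i, (w i) ^ (k / d))) := by
  have : Nonempty (Fin d) := ⟨⟨0, by lia⟩⟩
  have hright : ∀ᶠ u in 𝓝[>] (0 : ℝ), 0 ≤ φinv u ∧ φ (φinv u) = u := by
    filter_upwards [Ioc_mem_nhdsGT one_pos] with u hu using hinv u hu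
  have hφinv : Tendsto φinv (𝓝[>] (0 : ℝ)) atTop :=
    tendsto_rightInverse_atTop_of_antitoneOn hanti.antitoneOn
      (fun _ ht => lt_of_strictAntiOn_Ici_of_tendsto_atTop hanti hφtop ht) hright
  simpa only [Fintype.card_fin] using archimedean_tail_dependence_rapidly_varying_general
    hanti.antitoneOn hφinv (hright.mono fun _ hu => hu.2)
    ((eventually_ge_atTop 0).mono hgpos) hsn1 hα hGamma
    (by simpa only [Fintype.card_fin] using hratio) hw
end

section
/- Let θ > 0 and let φ(t) = −log(1 − (1 − e^{−θ})e^{−t})/θ for t ≥ 0, with inverse φ⁻¹ on (0,1]. Then for all w₁ > 0 and w₂ > 0, lim_{u→0⁺} φ(φ⁻¹(u·w₁) + φ⁻¹(u·w₂)) / u² = (θ/(1 − e^{−θ}))·w₁·w₂. -/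
open Filter Topology

/-!
Put `x = exp (-t)`. This turns the generator `φ` into a function `κ` with `κ 0 = 0` and
`κ' 0 = (1 - exp (-θ)) / θ`, and the sum `∑ i, φ⁻¹ (uᵢ)` into the product `∏ i, λ (uᵢ)`, where `λ`
is the inverse of `κ`, so that `λ' 0 = θ / (1 - exp (-θ))`. As `u → 0`, each factor `λ (u * wᵢ)` is
asymptotic to `λ' 0 * wᵢ * u` and `κ` acts as multiplication by `κ' 0 = (λ' 0)⁻¹`, which cancels
one of the factors `λ' 0`.
-/

theorem tendsto_div_of_hasDerivAt_zero {𝕜 : Type*} [NontriviallyNormedField 𝕜] {f : 𝕜 → 𝕜} {c : 𝕜}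
    (hf : HasDerivAt f c 0) (hf₀ : f 0 = 0) :
    Tendsto (fun u => f u / u) (𝓝[≠] 0) (𝓝 c) := by
  simpa [hf₀, div_eq_inv_mul] using hf.tendsto_slope_zero

theorem tendsto_comp_prod_div_pow_card {𝕜 ι : Type*} [NontriviallyNormedField 𝕜]
    {g : 𝕜 → 𝕜} {f : ι → 𝕜 → 𝕜} {b : 𝕜} {c : ι → 𝕜} {s : Finset ι} (hs : s.Nonempty)
    (hg : HasDerivAt g b 0) (hg₀ : g 0 = 0)
    (hf : ∀ i ∈ s, HasDerivAt (f i) (c i) 0) (hf₀ : ∀ i ∈ s, f i 0 = 0) :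
    Tendsto (fun u => g (∏ i ∈ s, f i u) / u ^ s.card) (𝓝[≠] 0) (𝓝 (b * ∏ i ∈ s, c i)) := by
  -- Unlike `g y / y`, the slope `dslope g 0 y` needs no `y ≠ 0` to recover `g y`.
  have hg_eq (y : 𝕜) : g y = dslope g 0 y * y := by
    simpa [hg₀, mul_comm] using (sub_smul_dslope g 0 y).symm
  have hdslope : Tendsto (dslope g 0) (𝓝 0) (𝓝 b) := by
    simpa [ContinuousAt, hg.deriv] using continuousAt_dslope_same.2 hg.differentiableAt
  have hprod : Tendsto (fun u => ∏ i ∈ s, f i u) (𝓝[≠] 0) (𝓝 0) := by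
    have hlim := tendsto_finsetProd s fun i hi => (hf i hi).continuousAt.tendsto
    rw [Finset.prod_congr rfl hf₀, Finset.prod_const, zero_pow hs.card_ne_zero] at hlim
    exact hlim.mono_left nhdsWithin_le_nhds
  have hquot : Tendsto (fun u => ∏ i ∈ s, f i u / u) (𝓝[≠] 0) (𝓝 (∏ i ∈ s, c i)) :=
    tendsto_finsetProd s fun i hi => tendsto_div_of_hasDerivAt_zero (hf i hi) (hf₀ i hi)
  refine ((hdslope.comp hprod).mul hquot).congr fun u => ?_
  rw [hg_eq, Finset.prod_div_distrib, Finset.prod_const, Function.comp_apply, mul_div_assoc]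

theorem eventually_forall_mul_mem_Ioc {ι : Type*} [Finite ι] {w : ι → ℝ} (hw : ∀ i, 0 < w i)
    {r : ℝ} (hr : 0 < r) : ∀ᶠ u in 𝓝[>] (0 : ℝ), ∀ i, u * w i ∈ Set.Ioc 0 r := by
  refine eventually_all.2 fun i => ?_
  filter_upwards [Ioc_mem_nhdsGT (div_pos hr (hw i))] with u hu
  exact ⟨mul_pos hu.1 (hw i), (le_div_iff₀ (hw i)).1 hu.2⟩

/-- The multiplicative generator `λ` of the Frank copula with parameter `θ ≠ 0`: the copula is
`λ⁻¹ (λ u₁ * λ u₂)`, and `λ = exp (-φ⁻¹)` for the additive generator `φ`. -/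
noncomputable def frankMulGenerator (θ u : ℝ) : ℝ :=
  (1 - Real.exp (-(θ * u))) / (1 - Real.exp (-θ))

/-- The inverse of `frankMulGenerator θ` on `[0, 1]`. The additive generator `φ` of the Frank copula
is its composition with `t ↦ exp (-t)`. -/
noncomputable def frankMulGeneratorInv (θ x : ℝ) : ℝ :=
  -Real.log (1 - (1 - Real.exp (-θ)) * x) / θ

theorem frankMulGenerator_zero (θ : ℝ) : frankMulGenerator θ 0 = 0 := by
  simp [frankMulGenerator]

theorem frankMulGeneratorInv_zero (θ : ℝ) : frankMulGeneratorInv θ 0 = 0 := by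
  simp [frankMulGeneratorInv]

theorem hasDerivAt_frankMulGenerator_zero (θ : ℝ) :
    HasDerivAt (frankMulGenerator θ) (θ / (1 - Real.exp (-θ))) 0 := by
  have hlin : HasDerivAt (fun u : ℝ => -(θ * u)) (-θ) 0 := by
    simpa using (hasDerivAt_id (0 : ℝ)).const_mul (-θ)
  exact ((hlin.exp.const_sub 1).div_const (1 - Real.exp (-θ))).congr_deriv (by simp)

theorem hasDerivAt_frankMulGeneratorInv_zero (θ : ℝ) :
    HasDerivAt (frankMulGeneratorInv θ) ((1 - Real.exp (-θ)) / θ) 0 := by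
  have hlin : HasDerivAt (fun x : ℝ => 1 - (1 - Real.exp (-θ)) * x) (-(1 - Real.exp (-θ))) 0 := by
    simpa using ((hasDerivAt_id (0 : ℝ)).const_mul (1 - Real.exp (-θ))).const_sub 1
  exact ((hlin.log (by simp)).neg.div_const θ).congr_deriv (by simp)

theorem one_sub_exp_neg_ne_zero {θ : ℝ} (hθ : θ ≠ 0) : 1 - Real.exp (-θ) ≠ 0 :=
  sub_ne_zero.2 (Ne.symm (mt (Real.exp_eq_one_iff _).1 (neg_ne_zero.2 hθ)))

theorem one_sub_one_sub_exp_neg_mul_pos (θ : ℝ) {x : ℝ} (hx : x ∈ Set.Icc (0 : ℝ) 1) :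
    0 < 1 - (1 - Real.exp (-θ)) * x := by
  rcases hx.1.eq_or_lt with rfl | hx₀
  · simp
  · linarith [hx.2, mul_pos (Real.exp_pos (-θ)) hx₀]

theorem frankMulGenerator_frankMulGeneratorInv {θ x : ℝ} (hθ : θ ≠ 0) (hx : x ∈ Set.Icc (0 : ℝ) 1) :
    frankMulGenerator θ (frankMulGeneratorInv θ x) = x := by
  rw [frankMulGenerator, frankMulGeneratorInv, mul_div_cancel₀ _ hθ, neg_neg,
    Real.exp_log (one_sub_one_sub_exp_neg_mul_pos θ hx), sub_sub_cancel,
    mul_div_cancel_left₀ _ (one_sub_exp_neg_ne_zero hθ)]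

theorem tendsto_frankMulGeneratorInv_prod_div_pow_card {θ : ℝ} (hθ : θ ≠ 0)
    {ι : Type*} [Fintype ι] [Nonempty ι] (w : ι → ℝ) :
    Tendsto (fun u => frankMulGeneratorInv θ (∏ i, frankMulGenerator θ (u * w i)) /
        u ^ Fintype.card ι)
      (𝓝[≠] 0) (𝓝 ((θ / (1 - Real.exp (-θ))) ^ (Fintype.card ι - 1) * ∏ i, w i)) := by
  have hfactor (i : ι) : HasDerivAt (fun u => frankMulGenerator θ (u * w i))
      (θ / (1 - Real.exp (-θ)) * w i) 0 := by
    refine HasDerivAt.comp (h₂ := frankMulGenerator θ) 0 ?_ (hasDerivAt_mul_const (w i))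
    simpa only [zero_mul] using hasDerivAt_frankMulGenerator_zero θ
  have hlim := tendsto_comp_prod_div_pow_card Finset.univ_nonempty
    (hasDerivAt_frankMulGeneratorInv_zero θ) (frankMulGeneratorInv_zero θ)
    (fun i _ => hfactor i) (fun i _ => by rw [zero_mul, frankMulGenerator_zero])
  have hL : θ / (1 - Real.exp (-θ)) ≠ 0 := div_ne_zero hθ (one_sub_exp_neg_ne_zero hθ)
  rwa [Finset.prod_mul_distrib, Finset.prod_const, Finset.card_univ, ← inv_div θ, ← mul_assoc,
    ← mul_pow_sub_one Fintype.card_ne_zero, inv_mul_cancel_left₀ hL] at hlim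

theorem frank_copula_second_order_tail_dependence_general
    {θ : ℝ} (hθ : θ ≠ 0) {φ φinv : ℝ → ℝ}
    (hφ : ∀ t ≥ (0 : ℝ), φ t = -Real.log (1 - (1 - Real.exp (-θ)) * Real.exp (-t)) / θ)
    (hinv : ∀ u ∈ Set.Ioc (0 : ℝ) 1, 0 ≤ φinv u ∧ φ (φinv u) = u)
    {ι : Type*} [Fintype ι] [Nonempty ι] {w : ι → ℝ} (hw : ∀ i, 0 < w i) :
    Tendsto (fun u => φ (∑ i, φinv (u * w i)) / u ^ Fintype.card ι)
      (𝓝[>] (0 : ℝ))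
      (𝓝 ((θ / (1 - Real.exp (-θ))) ^ (Fintype.card ι - 1) * ∏ i, w i)) := by
  have hφ' (t : ℝ) (ht : 0 ≤ t) : φ t = frankMulGeneratorInv θ (Real.exp (-t)) := hφ t ht
  have hexp (v : ℝ) (hv : v ∈ Set.Ioc (0 : ℝ) 1) :
      Real.exp (-φinv v) = frankMulGenerator θ v := by
    obtain ⟨hnonneg, hright⟩ := hinv v hv
    have hmem : Real.exp (-φinv v) ∈ Set.Icc (0 : ℝ) 1 :=
      ⟨(Real.exp_pos _).le, Real.exp_le_one_iff.2 (neg_nonpos.2 hnonneg)⟩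
    rw [← frankMulGenerator_frankMulGeneratorInv hθ hmem, ← hφ' _ hnonneg, hright]
  refine ((tendsto_frankMulGeneratorInv_prod_div_pow_card hθ w).mono_left
    (nhdsGT_le_nhdsNE 0)).congr' ?_
  filter_upwards [eventually_forall_mul_mem_Ioc hw one_pos] with u hu
  rw [hφ' _ (Finset.sum_nonneg fun i _ => (hinv _ (hu i)).1), ← Finset.sum_neg_distrib,
    Real.exp_sum, Finset.prod_congr rfl fun i _ => hexp _ (hu i)]

/-- Example 3.5 (Frank copula): the second-order lower tail dependence function
of the bivariate Frank copula is `(θ/(1-e^{-θ})) w₁ w₂`. -/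
theorem frank_copula_second_order_tail_dependence
    (θ : ℝ) (hθ : 0 < θ)
    (φ φinv : ℝ → ℝ)
    (hφ : ∀ t ≥ (0:ℝ),
      φ t = -Real.log (1 - (1 - Real.exp (-θ)) * Real.exp (-t)) / θ)
    (hinv : ∀ u ∈ Set.Ioc (0:ℝ) 1, 0 ≤ φinv u ∧ φ (φinv u) = u)
    (w₁ w₂ : ℝ) (hw₁ : 0 < w₁) (hw₂ : 0 < w₂) :
    Tendsto (fun u => φ (φinv (u * w₁) + φinv (u * w₂)) / u ^ 2)
      (𝓝[>] (0:ℝ)) (𝓝 ((θ / (1 - Real.exp (-θ))) * w₁ * w₂)) := by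
  have hw : ∀ i, 0 < ![w₁, w₂] i := Fin.forall_fin_two.2 ⟨hw₁, hw₂⟩
  simpa [mul_assoc] using frank_copula_second_order_tail_dependence_general hθ.ne' hφ hinv hw
end

section
/- Let θ ≥ 1 and let φ(t) = 1 − (1 − e^{−t})^{1/θ} for t ≥ 0, with inverse φ⁻¹ on (0,1]. Then for all w₁ > 0 and w₂ > 0, lim_{u→0⁺} φ(φ⁻¹(u·w₁) + φ⁻¹(u·w₂)) / u² = θ·w₁·w₂. -/
open Filter Topology

/-!
The B5 generator satisfies `φ t ~ θ⁻¹ * exp (-t)` as `t → ∞`. Whenever `φ t ~ c * exp (-t)`, the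
exponential turns sums into products, so `φ (∑ tᵢ) ~ c * ∏ (c⁻¹ * φ tᵢ)` as all `tᵢ → ∞`.
Substituting `tᵢ = φ⁻¹ (u * wᵢ)`, which tends to `∞` as `u → 0⁺`, makes the right-hand side exactly
`c * ∏ (c⁻¹ * (u * wᵢ))`.
-/

open Asymptotics Set Real

lemma tendsto_finsetSum_atTop {α ι M : Type*} [AddCommMonoid M] [PartialOrder M]
    [IsOrderedAddMonoid M] {l : Filter α} {s : Finset ι} (hs : s.Nonempty) {f : ι → α → M}
    (hf : ∀ i ∈ s, Tendsto (f i) l atTop) : Tendsto (fun x ↦ ∑ i ∈ s, f i x) l atTop := by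
  obtain ⟨j, hj⟩ := hs
  refine tendsto_atTop_mono' l ?_ (hf j hj)
  have hnonneg : ∀ᶠ x in l, ∀ i ∈ s, 0 ≤ f i x :=
    (eventually_all_finset s).2 fun i hi ↦ (hf i hi).eventually_ge_atTop 0
  filter_upwards [hnonneg] with x hx using Finset.single_le_sum hx hj

lemma tendsto_atTop_of_antitoneOn_of_eventually_apply_eq {α β : Type*} [LinearOrder α]
    [LinearOrder β] [TopologicalSpace β] [OrderTopology β] {f : α → β} {g : β → α} {a : α} {b : β}
    (hf : AntitoneOn f (Ici a)) (hb : ∀ x ∈ Ici a, b < f x)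
    (hg : ∀ᶠ y in 𝓝[>] b, a ≤ g y ∧ f (g y) = y) : Tendsto g (𝓝[>] b) atTop := by
  refine tendsto_atTop.2 fun x ↦ ?_
  have hx : max x a ∈ Ici a := le_max_right x a
  filter_upwards [hg, Ioo_mem_nhdsGT (hb _ hx)] with y ⟨hay, hfy⟩ hy
  by_contra! hlt
  have hle : f (max x a) ≤ f (g y) := hf hay hx (hlt.le.trans (le_max_left x a))
  exact (hle.trans_eq hfy).not_gt hy.2

lemma isEquivalent_sub_of_hasDerivAt {𝕜 : Type*} [NontriviallyNormedField 𝕜] {f : 𝕜 → 𝕜}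
    {f' x : 𝕜} (hf : HasDerivAt f f' x) (hf' : f' ≠ 0) :
    (fun y ↦ f y - f x) ~[𝓝 x] fun y ↦ f' * (y - x) := by
  refine IsLittleO.isEquivalent (IsLittleO.const_mul_right hf' ?_)
  simpa only [smul_eq_mul, mul_comm] using! hf.isLittleO

lemma isEquivalent_one_sub_one_sub_rpow {p : ℝ} (hp : p ≠ 0) :
    (fun x : ℝ ↦ 1 - (1 - x) ^ p) ~[𝓝 0] fun x ↦ p * x := by
  have hderiv : HasDerivAt (fun x : ℝ ↦ 1 - (1 - x) ^ p) p 0 := by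
    have hbase : HasDerivAt (fun x : ℝ ↦ 1 - x) (-1) 0 := (hasDerivAt_id 0).const_sub 1
    simpa using (hbase.rpow_const (p := p) (Or.inl (by norm_num))).const_sub 1
  simpa using isEquivalent_sub_of_hasDerivAt hderiv hp

section ExponentialTail

variable {φ : ℝ → ℝ} {c : ℝ}

lemma isEquivalent_apply_sum_of_isEquivalent_exp_neg (hc : c ≠ 0)
    (hφ : φ ~[atTop] fun t ↦ c * exp (-t)) {α ι : Type*} {l : Filter α} {s : Finset ι}
    (hs : s.Nonempty) {τ : ι → α → ℝ} (hτ : ∀ i ∈ s, Tendsto (τ i) l atTop) :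
    (fun x ↦ φ (∑ i ∈ s, τ i x)) ~[l] fun x ↦ c * ∏ i ∈ s, c⁻¹ * φ (τ i x) := by
  have hexp : ∀ i ∈ s, (fun x ↦ exp (-τ i x)) ~[l] fun x ↦ c⁻¹ * φ (τ i x) := fun i hi ↦ by
    have h := (IsEquivalent.refl (u := fun _ ↦ c⁻¹)).mul (hφ.comp_tendsto (hτ i hi)).symm
    simpa only [Pi.mul_def, Function.comp_def, inv_mul_cancel_left₀ hc] using h
  calc (fun x ↦ φ (∑ i ∈ s, τ i x))
      ~[l] fun x ↦ c * exp (-∑ i ∈ s, τ i x) :=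
        hφ.comp_tendsto (tendsto_finsetSum_atTop hs hτ)
    _ = fun x ↦ c * ∏ i ∈ s, exp (-τ i x) := by
        simp only [← Finset.sum_neg_distrib, exp_sum]
    _ ~[l] fun x ↦ c * ∏ i ∈ s, c⁻¹ * φ (τ i x) :=
        IsEquivalent.refl.mul (IsEquivalent.finsetProd hexp)

theorem tendsto_apply_sum_div_pow_of_isEquivalent_exp_neg (hc : c ≠ 0)
    (hφ : φ ~[atTop] fun t ↦ c * exp (-t)) {φinv : ℝ → ℝ}
    (hφinv : Tendsto φinv (𝓝[>] 0) atTop) (hinv : ∀ᶠ u in 𝓝[>] 0, φ (φinv u) = u)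
    {ι : Type*} {s : Finset ι} (hs : s.Nonempty) {w : ι → ℝ} (hw : ∀ i ∈ s, 0 < w i) :
    Tendsto (fun u ↦ φ (∑ i ∈ s, φinv (u * w i)) / u ^ s.card) (𝓝[>] 0)
      (𝓝 (c * ∏ i ∈ s, c⁻¹ * w i)) := by
  have hscale : ∀ i ∈ s, Tendsto (fun u ↦ u * w i) (𝓝[>] 0) (𝓝[>] 0) :=
    fun i hi ↦ by
      simpa only [mul_comm] using tendsto_iff_comap.2 (comap_mulLeft_nhdsGT_zero (hw i hi)).ge
  have hequiv := (isEquivalent_apply_sum_of_isEquivalent_exp_neg hc hφ hs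
    fun i hi ↦ hφinv.comp (hscale i hi)).div (IsEquivalent.refl (u := fun u ↦ u ^ s.card))
  refine (hequiv.trans_eventuallyEq ?_).tendsto_const
  have hinv' : ∀ᶠ u in 𝓝[>] 0, ∀ i ∈ s, φ (φinv (u * w i)) = u * w i :=
    (eventually_all_finset s).2 fun i hi ↦ (hscale i hi).eventually hinv
  filter_upwards [hinv', self_mem_nhdsWithin] with u hu hpos
  have hprod : ∏ i ∈ s, c⁻¹ * φ (φinv (u * w i)) = u ^ s.card * ∏ i ∈ s, c⁻¹ * w i := by
    rw [← Finset.prod_const, ← Finset.prod_mul_distrib]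
    exact Finset.prod_congr rfl fun i hi ↦ by rw [hu i hi, mul_left_comm]
  have hpow : u ^ s.card ≠ 0 := pow_ne_zero _ (ne_of_gt hpos)
  simp only [Pi.div_apply, Function.comp_apply, Function.const_apply, hprod]
  rw [mul_left_comm, mul_div_cancel_left₀ _ hpow]

end ExponentialTail

/-- The generator of the B5 (Joe) Archimedean copula with parameter `θ`. Only its values on `[0, ∞)`
are meaningful: for `t < 0` the base of the power is negative. -/
noncomputable def b5Generator (θ t : ℝ) : ℝ := 1 - (1 - exp (-t)) ^ (1 / θ)

section B5Generator

variable {θ : ℝ}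

lemma one_sub_exp_neg_nonneg {t : ℝ} (ht : 0 ≤ t) : 0 ≤ 1 - exp (-t) :=
  sub_nonneg.2 (exp_le_one_iff.2 (neg_nonpos.2 ht))

lemma b5Generator_pos (hθ : 0 < θ) {t : ℝ} (ht : 0 ≤ t) : 0 < b5Generator θ t :=
  sub_pos.2 <| rpow_lt_one (one_sub_exp_neg_nonneg ht) (sub_lt_self 1 (exp_pos _))
    (one_div_pos.2 hθ)

lemma antitoneOn_b5Generator (hθ : 0 < θ) : AntitoneOn (b5Generator θ) (Ici 0) := by
  intro s hs t _ hst
  have hbase : 1 - exp (-s) ≤ 1 - exp (-t) := by gcongr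
  exact sub_le_sub_left
    (rpow_le_rpow (one_sub_exp_neg_nonneg hs) hbase (one_div_pos.2 hθ).le) 1

lemma isEquivalent_b5Generator_atTop (hθ : θ ≠ 0) :
    b5Generator θ ~[atTop] fun t ↦ θ⁻¹ * exp (-t) := by
  rw [← one_div]
  exact (isEquivalent_one_sub_one_sub_rpow (one_div_ne_zero hθ)).comp_tendsto
    tendsto_exp_neg_atTop_nhds_zero

end B5Generator

theorem b5_copula_second_order_tail_dependence_general
    {θ : ℝ} (hθ : 0 < θ) {φ φinv : ℝ → ℝ}
    (hφ : ∀ t ≥ (0 : ℝ), φ t = 1 - (1 - exp (-t)) ^ (1 / θ))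
    (hinv : ∀ u ∈ Ioc (0 : ℝ) 1, 0 ≤ φinv u ∧ φ (φinv u) = u)
    {ι : Type*} [Fintype ι] [Nonempty ι] {w : ι → ℝ} (hw : ∀ i, 0 < w i) :
    Tendsto (fun u ↦ φ (∑ i, φinv (u * w i)) / u ^ Fintype.card ι) (𝓝[>] 0)
      (𝓝 (θ ^ (Fintype.card ι - 1) * ∏ i, w i)) := by
  have hEqOn : EqOn (b5Generator θ) φ (Ici 0) := fun t ht ↦ (hφ t ht).symm
  have hequiv : φ ~[atTop] fun t ↦ θ⁻¹ * exp (-t) :=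
    (isEquivalent_b5Generator_atTop hθ.ne').congr_left (hEqOn.eventuallyEq_of_mem (Ici_mem_atTop 0))
  have hinv' : ∀ᶠ u in 𝓝[>] 0, 0 ≤ φinv u ∧ φ (φinv u) = u :=
    mem_of_superset (Ioc_mem_nhdsGT one_pos) hinv
  have hφinv : Tendsto φinv (𝓝[>] 0) atTop :=
    tendsto_atTop_of_antitoneOn_of_eventually_apply_eq
      ((antitoneOn_b5Generator hθ).congr hEqOn)
      (fun t ht ↦ (b5Generator_pos hθ ht).trans_eq (hEqOn ht)) hinv'
  have hconst : θ⁻¹ * ∏ i, θ⁻¹⁻¹ * w i = θ ^ (Fintype.card ι - 1) * ∏ i, w i := by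
    rw [inv_inv, Finset.prod_mul_distrib, Finset.prod_const, Finset.card_univ, ← mul_assoc,
      ← mul_pow_sub_one Fintype.card_ne_zero θ, inv_mul_cancel_left₀ hθ.ne']
  rw [← hconst]
  exact tendsto_apply_sum_div_pow_of_isEquivalent_exp_neg (inv_ne_zero hθ.ne') hequiv hφinv
    (hinv'.mono fun _ hu ↦ hu.2) Finset.univ_nonempty fun i _ ↦ hw i

/-- Example 3.6 (B5 copula): the second-order lower tail dependence function
of the bivariate B5 copula is `θ w₁ w₂`. -/
theorem b5_copula_second_order_tail_dependence
    (θ : ℝ) (hθ : 1 ≤ θ)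
    (φ φinv : ℝ → ℝ)
    (hφ : ∀ t ≥ (0:ℝ), φ t = 1 - (1 - Real.exp (-t)) ^ (1 / θ))
    (hinv : ∀ u ∈ Set.Ioc (0:ℝ) 1, 0 ≤ φinv u ∧ φ (φinv u) = u)
    (w₁ w₂ : ℝ) (hw₁ : 0 < w₁) (hw₂ : 0 < w₂) :
    Tendsto (fun u => φ (φinv (u * w₁) + φinv (u * w₂)) / u ^ 2)
      (𝓝[>] (0:ℝ)) (𝓝 (θ * w₁ * w₂)) := by
  simpa [Fin.sum_univ_two, Fin.prod_univ_two, mul_assoc] using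
    b5_copula_second_order_tail_dependence_general (zero_lt_one.trans_le hθ) hφ hinv
      (w := ![w₁, w₂]) (Fin.forall_fin_two.2 ⟨hw₁, hw₂⟩)
end

section
/- Let θ ≥ 1 and let φ(t) = exp(−t^{1/θ}) for t ≥ 0, with inverse φ⁻¹(u) = (log(1/u))^θ for 0 < u ≤ 1. Then for all w₁ > 0 and w₂ > 0, lim_{u→0⁺} φ(φ⁻¹(u·w₁) + φ⁻¹(u·w₂)) / u^{2^{1/θ}} = (w₁·w₂)^{2^{−1+1/θ}}; equivalently, lim_{u→0⁺} exp(−((log(1/(u w₁)))^θ + (log(1/(u w₂)))^θ)^{1/θ}) / u^{2^{1/θ}} = (w₁ w₂)^{2^{−1+1/θ}}. -/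
open Filter Topology

/-!
Write `N x = (∑ i, x i ^ θ) ^ (1 / θ)` and `L = -log u`. The copula at `u • w` is
`exp (-N (L • 1 + v))` with `v = -log w`, while `u ^ N 1 = exp (-L * N 1)`. Since `N` is homogeneous
of degree one, `N (L • 1 + v) - L * N 1` is the difference quotient of `N` at `1` in direction `v`
with step `L⁻¹`, so as `u → 0⁺` it converges to the directional derivative.
-/

section Homogeneous

variable {E F : Type*} [AddCommGroup E] [Module ℝ E] [TopologicalSpace E] [ContinuousAdd E]
  [ContinuousSMul ℝ E] [NormedAddCommGroup F] [NormedSpace ℝ F]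

theorem tendsto_sub_smul_of_homogeneous {f : E → F} {f' : F} {x v : E}
    (hhom : ∀ᶠ y in 𝓝 x, ∀ t : ℝ, 0 < t → f (t • y) = t • f y)
    (hf : HasLineDerivAt ℝ f f' x v) :
    Tendsto (fun t : ℝ => f (t • x + v) - t • f x) atTop (𝓝 f') := by
  have hslope : Tendsto (fun t : ℝ => t • (f (x + t⁻¹ • v) - f x)) atTop (𝓝 f') := by
    simpa only [Function.comp_def, inv_inv] using
      hf.tendsto_slope_zero_right.comp tendsto_inv_atTop_nhdsGT_zero
  have hline : Tendsto (fun t : ℝ => x + t⁻¹ • v) atTop (𝓝 x) := by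
    simpa only [zero_smul, add_zero] using
      ((tendsto_inv_atTop_zero (𝕜 := ℝ)).smul_const v).const_add x
  refine hslope.congr' ?_
  filter_upwards [hline.eventually hhom, eventually_gt_atTop 0] with t ht htpos
  rw [smul_sub, ← ht t htpos, smul_add, smul_inv_smul₀ htpos.ne']

end Homogeneous

section Gumbel

variable {ι : Type*} [Fintype ι] {θ : ℝ}

/-- The `θ`-th root of the sum of the `θ`-th powers of the coordinates: for `1 ≤ θ` and nonnegative
coordinates, the `ℓ^θ` norm. -/
noncomputable def powerSumRoot (θ : ℝ) (x : ι → ℝ) : ℝ :=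
  (∑ i, x i ^ θ) ^ (1 / θ)

theorem powerSumRoot_one (θ : ℝ) :
    powerSumRoot θ (1 : ι → ℝ) = (Fintype.card ι : ℝ) ^ (1 / θ) := by
  simp [powerSumRoot]

theorem powerSumRoot_smul (hθ : θ ≠ 0) {t : ℝ} (ht : 0 ≤ t) {x : ι → ℝ} (hx : 0 ≤ x) :
    powerSumRoot θ (t • x) = t * powerSumRoot θ x := by
  have hsum : 0 ≤ ∑ i, x i ^ θ := Finset.sum_nonneg fun i _ => Real.rpow_nonneg (hx i) θ
  calc powerSumRoot θ (t • x)
      = (t ^ θ * ∑ i, x i ^ θ) ^ (1 / θ) := by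
        simp only [powerSumRoot, Pi.smul_apply, smul_eq_mul, Real.mul_rpow ht (hx _),
          Finset.mul_sum]
    _ = t * powerSumRoot θ x := by
        rw [Real.mul_rpow (Real.rpow_nonneg ht θ) hsum, one_div, Real.rpow_rpow_inv ht hθ,
          ← one_div, powerSumRoot]

theorem hasLineDerivAt_powerSumRoot_one [Nonempty ι] (hθ : θ ≠ 0) (v : ι → ℝ) :
    HasLineDerivAt ℝ (powerSumRoot θ)
      ((Fintype.card ι : ℝ) ^ (-1 + 1 / θ) * ∑ i, v i) 1 v := by
  have hpow (i : ι) : HasDerivAt (fun s : ℝ => (1 + s * v i) ^ θ) (v i * θ) 0 := by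
    simpa using (((hasDerivAt_id (0 : ℝ)).mul_const (v i)).const_add 1).rpow_const
      (p := θ) (Or.inl (by simp))
  have hroot := (HasDerivAt.fun_sum fun i (_ : i ∈ Finset.univ) => hpow i).rpow_const
    (p := 1 / θ) (Or.inl (by simp))
  refine HasDerivAt.congr_deriv hroot ?_
  simp only [zero_mul, add_zero, Real.one_rpow, Finset.sum_const, Finset.card_univ, nsmul_eq_mul,
    mul_one, ← Finset.sum_mul, neg_add_eq_sub]
  field_simp

theorem tendsto_powerSumRoot_add_sub [Nonempty ι] (hθ : θ ≠ 0) (v : ι → ℝ) :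
    Tendsto (fun t : ℝ => powerSumRoot θ (t • 1 + v) - t * (Fintype.card ι : ℝ) ^ (1 / θ)) atTop
      (𝓝 ((Fintype.card ι : ℝ) ^ (-1 + 1 / θ) * ∑ i, v i)) := by
  have hnonneg : ∀ᶠ y : ι → ℝ in 𝓝 1, 0 ≤ y :=
    eventually_all.2 fun i => (continuous_apply i).continuousAt.eventually
      (eventually_ge_nhds zero_lt_one)
  simpa only [powerSumRoot_one, smul_eq_mul] using tendsto_sub_smul_of_homogeneous
    (hnonneg.mono fun _ hy _ ht => powerSumRoot_smul hθ ht.le hy)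
    (hasLineDerivAt_powerSumRoot_one hθ v)

/-- The Gumbel copula with parameter `θ`, that is `φ (∑ i, φ⁻¹ (u i))` for the Archimedean generator
`φ t = exp (-t ^ (1 / θ))`. It is a copula when `1 ≤ θ`; the formula is kept for every `θ`. -/
noncomputable def gumbelCopula (θ : ℝ) (u : ι → ℝ) : ℝ :=
  Real.exp (-powerSumRoot θ fun i => Real.log (1 / u i))

theorem gumbelCopula_smul_div_rpow (θ k : ℝ) {u : ℝ} (hu : 0 < u) {w : ι → ℝ}
    (hw : ∀ i, 0 < w i) :
    gumbelCopula θ (u • w) / u ^ k =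
      Real.exp (-(powerSumRoot θ (-Real.log u • 1 + fun i => -Real.log (w i)) -
        -Real.log u * k)) := by
  have hlog : (fun i => Real.log (1 / (u • w) i)) =
      -Real.log u • 1 + fun i => -Real.log (w i) := by
    ext i
    simp only [Pi.smul_apply, Pi.add_apply, Pi.one_apply, smul_eq_mul, mul_one, one_div,
      Real.log_inv, Real.log_mul hu.ne' (hw i).ne', neg_add]
  rw [gumbelCopula, hlog, Real.rpow_def_of_pos hu, ← Real.exp_sub]
  congr 1
  ring

theorem gumbel_copula_tail_dependence_general [Nonempty ι] (hθ : θ ≠ 0) {w : ι → ℝ}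
    (hw : ∀ i, 0 < w i) :
    Tendsto (fun u : ℝ => gumbelCopula θ (u • w) / u ^ (Fintype.card ι : ℝ) ^ (1 / θ)) (𝓝[>] 0)
      (𝓝 ((∏ i, w i) ^ (Fintype.card ι : ℝ) ^ (-1 + 1 / θ))) := by
  have hlog : Tendsto (fun u : ℝ => -Real.log u) (𝓝[>] 0) atTop :=
    tendsto_neg_atBot_atTop.comp Real.tendsto_log_nhdsGT_zero
  have hexp := (Real.continuous_exp.tendsto _).comp
    ((tendsto_powerSumRoot_add_sub hθ fun i => -Real.log (w i)).comp hlog).neg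
  have hlim : (∏ i, w i) ^ (Fintype.card ι : ℝ) ^ (-1 + 1 / θ) =
      Real.exp (-((Fintype.card ι : ℝ) ^ (-1 + 1 / θ) * ∑ i, -Real.log (w i))) := by
    rw [Real.rpow_def_of_pos (Finset.prod_pos fun i _ => hw i),
      Real.log_prod fun i _ => (hw i).ne', Finset.sum_neg_distrib, mul_neg, neg_neg, mul_comm]
  rw [hlim]
  refine hexp.congr' ?_
  filter_upwards [self_mem_nhdsWithin] with u hu
  exact (gumbelCopula_smul_div_rpow θ _ hu hw).symm

end Gumbel

/-- Example 3.8 (Gumbel copula): the lower tail dependence function of tail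
order `k = 2^{1/θ}` of the bivariate Gumbel copula, with
`φ(t) = exp(-t^{1/θ})` and `φ⁻¹(u) = (log(1/u))^θ`, is
`(w₁w₂)^{2^{-1+1/θ}}`. -/
theorem gumbel_copula_tail_dependence
    (θ : ℝ) (hθ : 1 ≤ θ)
    (w₁ w₂ : ℝ) (hw₁ : 0 < w₁) (hw₂ : 0 < w₂) :
    Tendsto
      (fun u => Real.exp (-(((Real.log (1 / (u * w₁))) ^ θ
          + (Real.log (1 / (u * w₂))) ^ θ) ^ (1 / θ)))
        / u ^ ((2:ℝ) ^ (1 / θ)))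
      (𝓝[>] (0:ℝ)) (𝓝 ((w₁ * w₂) ^ ((2:ℝ) ^ (-1 + 1 / θ)))) := by
  simpa [gumbelCopula, powerSumRoot] using gumbel_copula_tail_dependence_general
    (zero_lt_one.trans_le hθ).ne' (w := ![w₁, w₂]) (by simp [Fin.forall_fin_two, hw₁, hw₂])
end
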